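/- arXiv:2212.13188 — 16 statements merged into one kernel-verified Lean document; each statement's English description precedes it below -/
import Mathlib

section
/- For every u ∈ ℝ^N such that 1 is not an eigenvalue of the matrix Θ·Λ_u, the equation V = G₊(u,V) has a unique solution V ∈ ℝ^N, and this solution satisfies V ≥ 0. -/
open Matrix

/-- A nonnegative subinvariant vector of the transpose vanishes. -/
lemma key_zero {N : ℕ} (A : Matrix (Fin N) (Fin N) ℝ)
    (hrow : ∀ i, ∑ j, A i j ≤ 1)
    (hA : ¬ ∃ v : Fin N → ℝ, v ≠ 0 ∧ A.mulVec v = v)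
    (d : Fin N → ℝ) (hd : 0 ≤ d) (hle : ∀ i, d i ≤ A.transpose.mulVec d i) : d = 0 := by
  have hsum : ∑ i, A.transpose.mulVec d i ≤ ∑ i, d i := by
    simp only [Matrix.mulVec, dotProduct, Matrix.transpose_apply]
    rw [Finset.sum_comm]
    refine Finset.sum_le_sum fun j _ => ?_
    rw [← Finset.sum_mul]
    exact mul_le_of_le_one_left (hd j) (hrow j)
  have heq : ∀ i, d i = A.transpose.mulVec d i := by
    have h := (Finset.sum_eq_sum_iff_of_le (s := Finset.univ) (fun i _ => hle i)).1
      (le_antisymm (Finset.sum_le_sum fun i _ => hle i) hsum)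
    exact fun i => h i (Finset.mem_univ i)
  by_contra hne
  have h1 : ∃ v, v ≠ 0 ∧ (1 - A).transpose.mulVec v = 0 := by
    refine ⟨d, hne, ?_⟩
    rw [Matrix.transpose_sub, Matrix.transpose_one, Matrix.sub_mulVec, Matrix.one_mulVec]
    funext i
    simp [← heq i]
  rw [Matrix.exists_mulVec_eq_zero_iff, Matrix.det_transpose,
    ← Matrix.exists_mulVec_eq_zero_iff] at h1
  obtain ⟨v, hv, hv'⟩ := h1
  refine hA ⟨v, hv, ?_⟩
  rw [Matrix.sub_mulVec, Matrix.one_mulVec, sub_eq_zero] at hv'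
  exact hv'.symm

lemma exists_bound {N : ℕ} (A : Matrix (Fin N) (Fin N) ℝ) (hnn : ∀ i j, 0 ≤ A i j)
    (hrow : ∀ i, ∑ j, A i j ≤ 1)
    (hA : ¬ ∃ v : Fin N → ℝ, v ≠ 0 ∧ A.mulVec v = v)
    (b : Fin N → ℝ) (hb : 0 ≤ b) :
    ∃ B : Fin N → ℝ, 0 ≤ B ∧ ∀ i, B i = b i + A.transpose.mulVec B i := by
  have hdet : (1 - A).transpose.det ≠ 0 := by
    intro h
    rw [Matrix.det_transpose, ← Matrix.exists_mulVec_eq_zero_iff] at h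
    obtain ⟨v, hv, hv'⟩ := h
    refine hA ⟨v, hv, ?_⟩
    rw [Matrix.sub_mulVec, Matrix.one_mulVec, sub_eq_zero] at hv'
    exact hv'.symm
  let B := ((1 - A).transpose)⁻¹.mulVec b
  have hB : (1 - A).transpose.mulVec B = b := by
    simp only [B, Matrix.mulVec_mulVec]
    rw [Matrix.mul_nonsing_inv _ (isUnit_iff_ne_zero.2 hdet), Matrix.one_mulVec]
  have hB' : ∀ i, B i = b i + A.transpose.mulVec B i := by
    intro i
    rw [Matrix.transpose_sub, Matrix.transpose_one, Matrix.sub_mulVec, Matrix.one_mulVec] at hB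
    have := congrFun hB i
    simp only [Pi.sub_apply] at this
    linarith
  refine ⟨B, ?_, hB'⟩
  have h0 := key_zero A hrow hA (fun i => max (- B i) 0) (fun i => le_max_right _ _) (by
    intro i
    apply max_le
    · rw [hB' i]
      have h1 : - A.transpose.mulVec B i ≤ A.transpose.mulVec (fun i => max (- B i) 0) i := by
        simp only [Matrix.mulVec, dotProduct, Matrix.transpose_apply]
        rw [← Finset.sum_neg_distrib]
        refine Finset.sum_le_sum fun j _ => ?_
        rw [← mul_neg]
        exact mul_le_mul_of_nonneg_left (le_max_left _ _) (hnn _ _)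
      have := hb i
      simp only [Pi.zero_apply] at this
      linarith
    · simp only [Matrix.mulVec, dotProduct, Matrix.transpose_apply]
      exact Finset.sum_nonneg fun j _ => mul_nonneg (hnn _ _) (le_max_right _ _))
  intro i
  have h1 := congrFun h0 i
  have h2 := le_max_left (-B i) 0
  simp only [Pi.zero_apply] at h1 ⊢
  linarith

lemma tarski_box {N : ℕ} (B : Fin N → ℝ) (hB : 0 ≤ B) (F : (Fin N → ℝ) → (Fin N → ℝ))
    (hmono : ∀ x y, x ≤ y → F x ≤ F y) (h0 : ∀ x, 0 ≤ F x) (h1 : F B ≤ B) :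
    ∃ V, 0 ≤ V ∧ V = F V := by
  classical
  have hne : ({x : Fin N → ℝ | 0 ≤ x ∧ F x ≤ x}).Nonempty := ⟨B, hB, h1⟩
  let S := {x : Fin N → ℝ | 0 ≤ x ∧ F x ≤ x}
  have hbdd : BddBelow S := ⟨0, fun x hx => hx.1⟩
  have hglb : IsGLB S (fun i => sInf ((fun x : Fin N → ℝ => x i) '' S)) := by
    rw [isGLB_pi]
    intro i
    refine isGLB_csInf (hne.image _) ⟨0, ?_⟩
    rintro _ ⟨x, hx, rfl⟩
    exact hx.1 i
  set V := (fun i => sInf ((fun x : Fin N → ℝ => x i) '' S))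
  have hV0 : 0 ≤ V := hglb.2 fun x hx => hx.1
  have hFV : F V ≤ V := hglb.2 fun x hx => (hmono _ _ (hglb.1 hx)).trans hx.2
  exact ⟨V, hV0, le_antisymm (hglb.1 ⟨h0 V, hmono _ _ hFV⟩) hFV⟩

/-- For every `u ∈ ℝ^N` such that `1` is not an eigenvalue of `Θ·Λ_u`,
the equation `V = G₊(u,V)` has a unique solution `V ∈ ℝ^N`, and this solution
satisfies `V ≥ 0`, where `G₊(u,V) := (e + Π'u + Θ'V − l)⁺ ∘ 1_{u=l}`. -/
theorem stmt1 (N : ℕ) (hN : 1 < N)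
    (e l : Fin N → ℝ) (he : 0 ≤ e) (hl : 0 ≤ l)
    (P Th : Matrix (Fin N) (Fin N) ℝ)
    (hP : ∀ i j, 0 ≤ P i j) (hProw : ∀ i, ∑ j, P i j = 1)
    (hTh : ∀ i j, 0 ≤ Th i j) (hThrow : ∀ i, ∑ j, Th i j ≤ 1)
    (u : Fin N → ℝ)
    (heig : ¬ ∃ v : Fin N → ℝ, v ≠ 0 ∧
      (Th * Matrix.diagonal (fun i => if u i = l i then (1 : ℝ) else 0)).mulVec v = v) :
    ∃ V : Fin N → ℝ,
      (V = (fun i =>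
          max (e i + P.transpose.mulVec u i + Th.transpose.mulVec V i - l i) 0 *
            (if u i = l i then (1 : ℝ) else 0)) ∧ 0 ≤ V) ∧
      ∀ W : Fin N → ℝ,
        W = (fun i =>
          max (e i + P.transpose.mulVec u i + Th.transpose.mulVec W i - l i) 0 *
            (if u i = l i then (1 : ℝ) else 0)) → W = V := by
  set lam : Fin N → ℝ := fun i => if u i = l i then (1 : ℝ) else 0 with hlam
  have hl0 : ∀ i, 0 ≤ lam i := fun i => by simp only [hlam]; split_ifs <;> norm_num
  have hl1 : ∀ i, lam i ≤ 1 := fun i => by simp only [hlam]; split_ifs <;> norm_num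
  set A := Th * Matrix.diagonal lam with hAdef
  have hAij : ∀ i j, A i j = Th i j * lam j := fun i j => Matrix.mul_diagonal _ _ _ _
  have hAnn : ∀ i j, 0 ≤ A i j := fun i j => by
    rw [hAij]; exact mul_nonneg (hTh _ _) (hl0 _)
  have hArow : ∀ i, ∑ j, A i j ≤ 1 := fun i => by
    refine le_trans (Finset.sum_le_sum fun j _ => ?_) (hThrow i)
    rw [hAij]; exact mul_le_of_le_one_right (hTh _ _) (hl1 _)
  have hAT : ∀ x i, A.transpose.mulVec x i = Th.transpose.mulVec x i * lam i := by
    intro x i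
    simp only [Matrix.mulVec, dotProduct, Matrix.transpose_apply, Finset.sum_mul, hAij]
    exact Finset.sum_congr rfl fun j _ => by ring
  have hTmono : ∀ x y : Fin N → ℝ, x ≤ y → ∀ i,
      Th.transpose.mulVec x i ≤ Th.transpose.mulVec y i := fun x y hxy i => by
    simp only [Matrix.mulVec, dotProduct, Matrix.transpose_apply]
    exact Finset.sum_le_sum fun j _ => mul_le_mul_of_nonneg_left (hxy j) (hTh _ _)
  set c : Fin N → ℝ := fun i => e i + P.transpose.mulVec u i - l i with hc
  obtain ⟨B, hB0, hB⟩ := exists_bound A hAnn hArow heig (fun i => max (c i) 0 * lam i)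
    (fun i => mul_nonneg (le_max_right _ _) (hl0 i))
  obtain ⟨V, hV0, hV⟩ := tarski_box B hB0 (fun V i =>
      max (e i + P.transpose.mulVec u i + Th.transpose.mulVec V i - l i) 0 * lam i)
    (fun x y hxy i => mul_le_mul_of_nonneg_right
      (max_le_max (by linarith [hTmono x y hxy i]) le_rfl) (hl0 i))
    (fun x i => mul_nonneg (le_max_right _ _) (hl0 i))
    (by
      intro i
      simp only
      rw [hB i, hAT, ← add_mul]
      refine mul_le_mul_of_nonneg_right (max_le ?_ ?_) (hl0 i)
      · have := le_max_left (c i) 0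
        simp only [hc] at this ⊢
        linarith
      · have h1 := hTmono 0 B hB0 i
        have h2 := le_max_right (c i) 0
        simp only [Matrix.mulVec_zero, Pi.zero_apply] at h1
        linarith)
  refine ⟨V, ⟨hV, hV0⟩, fun W hW => ?_⟩
  have hz := key_zero A hArow heig (fun i => |W i - V i|) (fun i => abs_nonneg _) (by
    intro i
    rw [hAT]
    have h1 := congrFun hW i
    have h2 := congrFun hV i
    beta_reduce at h1 h2 ⊢
    rw [h1, h2, ← sub_mul, abs_mul, abs_of_nonneg (hl0 i)]
    refine mul_le_mul_of_nonneg_right ?_ (hl0 i)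
    refine (abs_max_sub_max_le_abs _ _ _).trans ?_
    have h3 : e i + P.transpose.mulVec u i + Th.transpose.mulVec W i - l i -
        (e i + P.transpose.mulVec u i + Th.transpose.mulVec V i - l i) =
        ∑ j, Th j i * (W j - V j) := by
      simp only [Matrix.mulVec, dotProduct, Matrix.transpose_apply, mul_sub,
        Finset.sum_sub_distrib]
      ring
    rw [h3]
    refine (Finset.abs_sum_le_sum_abs _ _).trans (Finset.sum_le_sum fun j _ => ?_)
    rw [abs_mul, abs_of_nonneg (hTh j i)]
    rfl)
  funext i
  have := congrFun hz i
  simp only [Pi.zero_apply, abs_eq_zero] at this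
  linarith
end

section
/- The map H is monotone on [0,l]: if p, p' ∈ [0,l] and p ≤ p' componentwise, then H(p) ≤ H(p'); moreover H(p) ≥ 0 for every p ∈ [0,l]. -/
open Matrix

/-- The map `H` (the unique solution of `V = G₊(u,V)` for `u ∈ [0,l]`)
is monotone on `[0,l]`: if `p, p' ∈ [0,l]` and `p ≤ p'` componentwise, then
`H(p) ≤ H(p')`; moreover `H(p) ≥ 0` for every `p ∈ [0,l]`. -/
theorem stmt2 (N : ℕ) (hN : 1 < N)
    (e l : Fin N → ℝ) (he : 0 ≤ e) (hl : 0 ≤ l)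
    (P Th : Matrix (Fin N) (Fin N) ℝ)
    (hP : ∀ i j, 0 ≤ P i j) (hProw : ∀ i, ∑ j, P i j = 1)
    (hTh : ∀ i j, 0 ≤ Th i j) (hThrow : ∀ i, ∑ j, Th i j ≤ 1)
    (Gp : (Fin N → ℝ) → (Fin N → ℝ) → Fin N → ℝ)
    (hGp : Gp = fun u V i =>
      max (e i + P.transpose.mulVec u i + Th.transpose.mulVec V i - l i) 0 *
        (if u i = l i then (1 : ℝ) else 0))
    (H : (Fin N → ℝ) → Fin N → ℝ)
    (hH : ∀ u ∈ Set.Icc (0 : Fin N → ℝ) l,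
      H u = Gp u (H u) ∧ ∀ W : Fin N → ℝ, W = Gp u W → W = H u) :
    (∀ p p' : Fin N → ℝ, p ∈ Set.Icc (0 : Fin N → ℝ) l →
      p' ∈ Set.Icc (0 : Fin N → ℝ) l → p ≤ p' → H p ≤ H p') ∧
    (∀ p ∈ Set.Icc (0 : Fin N → ℝ) l, 0 ≤ H p) := by
  have hmono : ∀ p p' : Fin N → ℝ, p ≤ p' → p' ≤ l → ∀ V V' : Fin N → ℝ, V ≤ V' →
      Gp p V ≤ Gp p' V' := by
    intro p p' hpp hp' V V' hV i
    have h1 : P.transpose.mulVec p i ≤ P.transpose.mulVec p' i := by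
      simp only [Matrix.mulVec, dotProduct, Matrix.transpose_apply]
      exact Finset.sum_le_sum fun j _ => mul_le_mul_of_nonneg_left (hpp j) (hP j i)
    have h2 : Th.transpose.mulVec V i ≤ Th.transpose.mulVec V' i := by
      simp only [Matrix.mulVec, dotProduct, Matrix.transpose_apply]
      exact Finset.sum_le_sum fun j _ => mul_le_mul_of_nonneg_left (hV j) (hTh j i)
    simp only [hGp]
    by_cases h : p i = l i
    · have h' : p' i = l i := le_antisymm (hp' i) (h ▸ hpp i)
      rw [if_pos h, if_pos h', mul_one, mul_one]
      exact max_le_max (by linarith) le_rfl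
    · rw [if_neg h, mul_zero]
      exact mul_nonneg (le_max_right _ _) (by split_ifs <;> norm_num)
  have hnn : ∀ p V : Fin N → ℝ, 0 ≤ Gp p V := by
    intro p V i
    simp only [hGp]
    exact mul_nonneg (le_max_right _ _) (by split_ifs <;> norm_num)
  have hpos : ∀ p ∈ Set.Icc (0 : Fin N → ℝ) l, 0 ≤ H p := by
    intro p hp
    rw [(hH p hp).1]
    exact hnn _ _
  refine ⟨?_, hpos⟩
  intro p p' hp hp' hpp
  let S : Set (Fin N → ℝ) := {V | V ≤ Gp p V ∧ V ≤ H p'}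
  have hself : ∀ V, V ≤ H p' → Gp p V ≤ H p' := by
    intro V hV
    rw [(hH p' hp').1]
    exact hmono p p' hpp hp'.2 V (H p') hV
  have h0 : (0 : Fin N → ℝ) ∈ S := ⟨hnn _ _, hpos p' hp'⟩
  let W : Fin N → ℝ := fun i => sSup ((fun V : Fin N → ℝ => V i) '' S)
  have hbdd : ∀ i, BddAbove ((fun V : Fin N → ℝ => V i) '' S) := by
    rintro i
    refine ⟨H p' i, ?_⟩
    rintro _ ⟨V, hV, rfl⟩
    exact hV.2 i
  have hub : ∀ V ∈ S, V ≤ W := fun V hV i => le_csSup (hbdd i) ⟨V, hV, rfl⟩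
  have hlub : ∀ B : Fin N → ℝ, (∀ V ∈ S, V ≤ B) → W ≤ B := by
    intro B hB i
    refine csSup_le ⟨_, 0, h0, rfl⟩ ?_
    rintro _ ⟨V, hV, rfl⟩
    exact hB V hV i
  have hWH : W ≤ H p' := hlub _ fun V hV => hV.2
  have hWG : W ≤ Gp p W := hlub _ fun V hV =>
    hV.1.trans (hmono p p le_rfl hp.2 V W (hub V hV))
  have hGW : Gp p W ≤ W := hub _ ⟨hmono p p le_rfl hp.2 _ _ hWG, hself _ hWH⟩
  have := (hH p hp).2 W (le_antisymm hWG hGW)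
  rw [← this]
  exact hWH
end

section
/- For every p ∈ [0,l] and every V ∈ ℝ^N with 0 ≤ V ≤ K, one has 0 ≤ G₊(p,V) ≤ K; in particular, for each p ∈ [0,l] the monotone map V ↦ G₊(p,V) maps the order interval [0,K] into itself. -/
open Matrix

/-- With `K := (I − Θ')⁻¹ (e + Π'l − l)⁺`, for every `p ∈ [0,l]` and every
`V ∈ ℝ^N` with `0 ≤ V ≤ K`, one has `0 ≤ G₊(p,V) ≤ K`; in particular, for each
`p ∈ [0,l]` the monotone map `V ↦ G₊(p,V)` maps the order interval `[0,K]` into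
itself. -/
theorem stmt3 (N : ℕ) (hN : 1 < N)
    (e l : Fin N → ℝ) (he : 0 ≤ e) (hl : 0 ≤ l)
    (P Th : Matrix (Fin N) (Fin N) ℝ)
    (hP : ∀ i j, 0 ≤ P i j) (hProw : ∀ i, ∑ j, P i j = 1)
    (hTh : ∀ i j, 0 ≤ Th i j) (hThrow : ∀ i, ∑ j, Th i j ≤ 1)
    (hInv : IsUnit (1 - Th.transpose))
    (hInvNonneg : ∀ i j, 0 ≤ (1 - Th.transpose)⁻¹ i j)
    (Gp : (Fin N → ℝ) → (Fin N → ℝ) → Fin N → ℝ)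
    (hGp : Gp = fun u V i =>
      max (e i + P.transpose.mulVec u i + Th.transpose.mulVec V i - l i) 0 *
        (if u i = l i then (1 : ℝ) else 0))
    (K : Fin N → ℝ)
    (hK : K = (1 - Th.transpose)⁻¹.mulVec
      (fun i => max (e i + P.transpose.mulVec l i - l i) 0)) :
    ∀ p ∈ Set.Icc (0 : Fin N → ℝ) l, ∀ V : Fin N → ℝ,
      0 ≤ V → V ≤ K → 0 ≤ Gp p V ∧ Gp p V ≤ K := by
  intro p hp V hV0 hVK
  have hmono : ∀ (A : Matrix (Fin N) (Fin N) ℝ), (∀ i j, 0 ≤ A i j) →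
      ∀ u w : Fin N → ℝ, u ≤ w → ∀ i, A.transpose.mulVec u i ≤ A.transpose.mulVec w i := by
    intro A hA u w huw i
    simp only [Matrix.mulVec, dotProduct, Matrix.transpose_apply]
    exact Finset.sum_le_sum fun j _ => mul_le_mul_of_nonneg_left (huw j) (hA j i)
  have hfix : ∀ i, K i = max (e i + P.transpose.mulVec l i - l i) 0
      + Th.transpose.mulVec K i := by
    intro i
    have h1 : (1 - Th.transpose).mulVec K
        = fun i => max (e i + P.transpose.mulVec l i - l i) 0 := by
      rw [hK, Matrix.mulVec_mulVec,
        Matrix.mul_nonsing_inv _ ((Matrix.isUnit_iff_isUnit_det _).1 hInv), Matrix.one_mulVec]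
    have h2 := congrFun h1 i
    rw [Matrix.sub_mulVec, Matrix.one_mulVec, Pi.sub_apply] at h2
    linarith
  have hb : ∀ i, max (e i + P.transpose.mulVec p i + Th.transpose.mulVec V i - l i) 0 ≤ K i := by
    intro i
    have a := hmono P hP p l hp.2 i
    have b := hmono Th hTh V K hVK i
    have c := le_max_left (e i + P.transpose.mulVec l i - l i) 0
    have d := hfix i
    exact max_le (by linarith) (le_trans (hV0 i) (hVK i))
  subst hGp
  refine ⟨fun i => ?_, fun i => ?_⟩
  · exact mul_nonneg (le_max_right _ _) (by split_ifs <;> norm_num)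
  · show max _ 0 * (if p i = l i then (1 : ℝ) else 0) ≤ K i
    split_ifs
    · rw [mul_one]; exact hb i
    · rw [mul_zero]; exact le_trans (hV0 i) (hVK i)
end

section
/- The map (b,p) ↦ F_b(p) maps {0,1}^N × [0,l] into [0,l] and is monotone with respect to the componentwise orderings: if b ≤ b' in {0,1}^N and p ≤ p' in [0,l], then F_b(p) ≤ F_{b'}(p'). -/
open Matrix

theorem mulVec_mono_aux {N : ℕ} (A : Matrix (Fin N) (Fin N) ℝ) (hA : ∀ i j, 0 ≤ A i j)
    {u v : Fin N → ℝ} (h : u ≤ v) (i : Fin N) :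
    A.transpose.mulVec u i ≤ A.transpose.mulVec v i := by
  simp only [Matrix.mulVec, dotProduct, Matrix.transpose_apply]
  exact Finset.sum_le_sum fun j _ => mul_le_mul_of_nonneg_left (h j) (hA j i)

theorem mulVec_nonneg_aux {N : ℕ} (A : Matrix (Fin N) (Fin N) ℝ) (hA : ∀ i j, 0 ≤ A i j)
    {u : Fin N → ℝ} (h : 0 ≤ u) (i : Fin N) : 0 ≤ A.transpose.mulVec u i := by
  simp only [Matrix.mulVec, dotProduct, Matrix.transpose_apply]
  exact Finset.sum_nonneg fun j _ => mul_nonneg (hA j i) (h j)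

theorem mulVec_sum_aux {N : ℕ} (A : Matrix (Fin N) (Fin N) ℝ)
    (hrow : ∀ i, ∑ j, A i j ≤ 1) {u v : Fin N → ℝ} (h : u ≤ v) :
    ∑ i, (A.transpose.mulVec v i - A.transpose.mulVec u i) ≤ ∑ i, (v i - u i) := by
  simp only [Matrix.mulVec, dotProduct, Matrix.transpose_apply, ← Finset.sum_sub_distrib, ← mul_sub]
  rw [Finset.sum_comm]
  refine Finset.sum_le_sum fun j _ => ?_
  rw [← Finset.sum_mul]
  have := h j
  nlinarith [hrow j]

/-- The map `(b,p) ↦ F_b(p)` maps `{0,1}^N × [0,l]` into `[0,l]` and is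
monotone with respect to the componentwise orderings: if `b ≤ b'` in `{0,1}^N` and
`p ≤ p'` in `[0,l]`, then `F_b(p) ≤ F_{b'}(p')`. -/
theorem stmt5 (N : ℕ) (hN : 1 < N)
    (e l : Fin N → ℝ) (he : 0 ≤ e) (hl : 0 ≤ l)
    (P Th : Matrix (Fin N) (Fin N) ℝ)
    (hP : ∀ i j, 0 ≤ P i j) (hProw : ∀ i, ∑ j, P i j = 1)
    (hTh : ∀ i j, 0 ≤ Th i j) (hThrow : ∀ i, ∑ j, Th i j ≤ 1)
    (α β γ : ℝ) (hα : α ∈ Set.Icc (0:ℝ) 1) (hβ : β ∈ Set.Icc (0:ℝ) 1)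
    (hγ : γ ∈ Set.Icc (0:ℝ) 1)
    (Gp : (Fin N → ℝ) → (Fin N → ℝ) → Fin N → ℝ)
    (hGp : Gp = fun u V i =>
      max (e i + P.transpose.mulVec u i + Th.transpose.mulVec V i - l i) 0 *
        (if u i = l i then (1 : ℝ) else 0))
    (H : (Fin N → ℝ) → Fin N → ℝ)
    (hH : ∀ u ∈ Set.Icc (0 : Fin N → ℝ) l,
      H u = Gp u (H u) ∧ ∀ W : Fin N → ℝ, W = Gp u W → W = H u)
    (F : (Fin N → Bool) → (Fin N → ℝ) → Fin N → ℝ)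
    (hF : F = fun b p i =>
      let V := H p
      let xi := e i + P.transpose.mulVec p i + Th.transpose.mulVec V i
      let yi := α * e i + β * P.transpose.mulVec p i + γ * Th.transpose.mulVec V i
      let di : ℝ := if xi < l i then 1 else 0
      if b i then yi * di + l i * (1 - di) else min yi (l i)) :
    (∀ (b : Fin N → Bool) (p : Fin N → ℝ),
      p ∈ Set.Icc (0 : Fin N → ℝ) l → F b p ∈ Set.Icc (0 : Fin N → ℝ) l) ∧
    (∀ (b b' : Fin N → Bool) (p p' : Fin N → ℝ),
      p ∈ Set.Icc (0 : Fin N → ℝ) l → p' ∈ Set.Icc (0 : Fin N → ℝ) l →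
      b ≤ b' → p ≤ p' → F b p ≤ F b' p') := by
  have Hnn : ∀ u ∈ Set.Icc (0 : Fin N → ℝ) l, 0 ≤ H u := by
    intro u hu i
    rw [(hH u hu).1, hGp]
    simp only [Pi.zero_apply]
    split_ifs <;> simp
  have Hmono : ∀ u ∈ Set.Icc (0 : Fin N → ℝ) l, ∀ u' ∈ Set.Icc (0 : Fin N → ℝ) l,
      u ≤ u' → H u ≤ H u' := by
    intro u hu u' hu' huu
    obtain ⟨h1, -⟩ := hH u hu
    obtain ⟨h2, h3⟩ := hH u' hu'
    have hn' := Hnn u' hu'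
    generalize H u = V at *
    generalize H u' = V' at *
    have hVW : V ≤ V ⊔ V' := le_sup_left
    have hVW' : V' ≤ V ⊔ V' := le_sup_right
    have hWdef : ∀ i, (V ⊔ V') i = max (V i) (V' i) := fun i => rfl
    generalize V ⊔ V' = W at *
    have hsub : ∀ i, W i ≤ Gp u' W i := by
      intro i
      rw [hWdef]
      apply max_le
      · rw [h1, hGp]
        have a1 := mulVec_mono_aux P hP huu i
        have a2 := mulVec_mono_aux Th hTh hVW i
        simp only
        by_cases hc : u i = l i
        · have hc' : u' i = l i := le_antisymm (hu'.2 i) (hc ▸ huu i)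
          simp only [hc, hc', if_true, mul_one]
          exact max_le_max (by linarith) le_rfl
        · simp only [hc, if_false, mul_zero]
          split_ifs <;> simp
      · rw [h2, hGp]
        have a2 := mulVec_mono_aux Th hTh hVW' i
        simp only
        split_ifs
        · simp only [mul_one]
          exact max_le_max (by linarith) le_rfl
        · simp
    have hlip : ∀ i, Gp u' W i - V' i ≤
        Th.transpose.mulVec W i - Th.transpose.mulVec V' i := by
      intro i
      have a2 := mulVec_mono_aux Th hTh hVW' i
      have e2 := congrFun h2 i
      rw [e2, hGp]
      simp only
      split_ifs
      · simp only [mul_one]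
        rw [sub_le_iff_le_add]
        have b1 := le_max_left (e i + P.transpose.mulVec u' i + Th.transpose.mulVec V' i - l i) 0
        have b2 := le_max_right (e i + P.transpose.mulVec u' i + Th.transpose.mulVec V' i - l i) 0
        exact max_le (by linarith) (by linarith)
      · simp only [mul_zero]
        linarith
    have hs := Finset.sum_le_sum fun i (_ : i ∈ Finset.univ) => hlip i
    have hs2 := mulVec_sum_aux Th hThrow hVW'
    have hs3 : ∑ i, Gp u' W i ≤ ∑ i, W i := by
      simp only [Finset.sum_sub_distrib] at hs hs2
      linarith
    have heq := (Finset.sum_eq_sum_iff_of_le fun i (_ : i ∈ Finset.univ) => hsub i).1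
      (le_antisymm (Finset.sum_le_sum fun i _ => hsub i) hs3)
    have hW : W = V' := h3 W (funext fun i => heq i (Finset.mem_univ i))
    exact hW ▸ hVW
  obtain ⟨hα0, hα1⟩ := hα
  obtain ⟨hβ0, hβ1⟩ := hβ
  obtain ⟨hγ0, hγ1⟩ := hγ
  have hyx : ∀ p ∈ Set.Icc (0 : Fin N → ℝ) l, ∀ i,
      0 ≤ α * e i + β * P.transpose.mulVec p i + γ * Th.transpose.mulVec (H p) i ∧
      α * e i + β * P.transpose.mulVec p i + γ * Th.transpose.mulVec (H p) i ≤
        e i + P.transpose.mulVec p i + Th.transpose.mulVec (H p) i := by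
    intro p hp i
    have a1 := mulVec_nonneg_aux P hP hp.1 i
    have a2 := mulVec_nonneg_aux Th hTh (Hnn p hp) i
    have a3 : 0 ≤ e i := he i
    exact ⟨by positivity, by nlinarith⟩
  have hrange : ∀ (b : Fin N → Bool) (p : Fin N → ℝ),
      p ∈ Set.Icc (0 : Fin N → ℝ) l → F b p ∈ Set.Icc (0 : Fin N → ℝ) l := by
    intro b p hp
    have key : ∀ i, 0 ≤ F b p i ∧ F b p i ≤ l i := by
      intro i
      obtain ⟨y0, yx⟩ := hyx p hp i
      have l0 : 0 ≤ l i := hl i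
      rw [hF]
      simp only
      split_ifs with h1 h2
      · constructor <;> linarith
      · constructor <;> linarith
      · exact ⟨le_min y0 l0, min_le_right _ _⟩
    exact ⟨fun i => (key i).1, fun i => (key i).2⟩
  refine ⟨hrange, ?_⟩
  intro b b' p p' hp hp' hb hpp i
  have hFl : F b p i ≤ l i := (hrange b p hp).2 i
  have a1 := mulVec_mono_aux P hP hpp i
  have a2 := mulVec_mono_aux Th hTh (Hmono p hp p' hp' hpp) i
  have b1 := mul_le_mul_of_nonneg_left a1 hβ0
  have b2 := mul_le_mul_of_nonneg_left a2 hγ0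
  have hbi := hb i
  rw [hF] at hFl ⊢
  simp only at hFl ⊢
  cases hb1 : b i <;> cases hb2 : b' i <;> simp only [hb1, hb2] at hFl hbi ⊢
  · exact min_le_min (by linarith) le_rfl
  · by_cases hx : e i + P.transpose.mulVec p' i + Th.transpose.mulVec (H p') i < l i
    · simp only [hx, if_true]
      exact (min_le_left _ _).trans (by linarith)
    · simp only [hx, if_false, if_true]
      exact (min_le_right _ _).trans (by linarith)
  · exact absurd hbi (by simp)
  · by_cases hx : e i + P.transpose.mulVec p' i + Th.transpose.mulVec (H p') i < l i
    · have hx2 : e i + P.transpose.mulVec p i + Th.transpose.mulVec (H p) i < l i := by linarith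
      simp only [hx, hx2, if_true]
      linarith
    · simp only [hx, if_false, if_true] at hFl ⊢
      linarith
end

section
/- The set S of clearing vectors equals the union over all binary vectors b ∈ {0,1}^N of the fixpoint sets of F_b; that is, S = ⋃_{b ∈ {0,1}^N} {p ∈ [0,l] : p = F_b(p)}. -/
open Matrix

/-- The set `S` of clearing vectors equals the union over all binary
vectors `b ∈ {0,1}^N` of the fixpoint sets of `F_b`:
`S = ⋃_{b ∈ {0,1}^N} {p ∈ [0,l] : p = F_b(p)}`. -/
theorem stmt7 (N : ℕ) (hN : 1 < N)
    (e l : Fin N → ℝ) (he : 0 ≤ e) (hl : 0 ≤ l)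
    (P Th : Matrix (Fin N) (Fin N) ℝ)
    (hP : ∀ i j, 0 ≤ P i j) (hProw : ∀ i, ∑ j, P i j = 1)
    (hTh : ∀ i j, 0 ≤ Th i j) (hThrow : ∀ i, ∑ j, Th i j ≤ 1)
    (α β γ : ℝ) (hα : α ∈ Set.Icc (0:ℝ) 1) (hβ : β ∈ Set.Icc (0:ℝ) 1)
    (hγ : γ ∈ Set.Icc (0:ℝ) 1)
    (Clearing : (Fin N → ℝ) → (Fin N → ℝ) → Prop)
    (hClearing : ∀ p V : Fin N → ℝ, Clearing p V ↔
      (p ∈ Set.Icc (0 : Fin N → ℝ) l ∧ 0 ≤ V ∧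
      (∀ i, p i ≤ e i + P.transpose.mulVec p i + Th.transpose.mulVec V i) ∧
      (∀ i, p i = l i ∨
        p i = α * e i + β * P.transpose.mulVec p i + γ * Th.transpose.mulVec V i) ∧
      (∀ i, (p i = l i →
          V i = e i + P.transpose.mulVec p i + Th.transpose.mulVec V i - p i) ∧
        (p i ≠ l i → V i = 0))))
    (Gp : (Fin N → ℝ) → (Fin N → ℝ) → Fin N → ℝ)
    (hGp : Gp = fun u V i =>
      max (e i + P.transpose.mulVec u i + Th.transpose.mulVec V i - l i) 0 *
        (if u i = l i then (1 : ℝ) else 0))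
    (H : (Fin N → ℝ) → Fin N → ℝ)
    (hH : ∀ u ∈ Set.Icc (0 : Fin N → ℝ) l,
      H u = Gp u (H u) ∧ ∀ W : Fin N → ℝ, W = Gp u W → W = H u)
    (F : (Fin N → Bool) → (Fin N → ℝ) → Fin N → ℝ)
    (hF : F = fun b p i =>
      let V := H p
      let xi := e i + P.transpose.mulVec p i + Th.transpose.mulVec V i
      let yi := α * e i + β * P.transpose.mulVec p i + γ * Th.transpose.mulVec V i
      let di : ℝ := if xi < l i then 1 else 0
      if b i then yi * di + l i * (1 - di) else min yi (l i)) :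
    {p : Fin N → ℝ | ∃ V : Fin N → ℝ, Clearing p V} =
      ⋃ b : Fin N → Bool,
        {p : Fin N → ℝ | p ∈ Set.Icc (0 : Fin N → ℝ) l ∧ p = F b p} := by
  subst hGp hF
  ext p
  simp only [Set.mem_setOf_eq, Set.mem_iUnion]
  constructor
  · rintro ⟨V, hV⟩
    obtain ⟨hp, hV0, hlim, hprio, heq⟩ := (hClearing p V).1 hV
    have hVH : V = H p := by
      refine (hH p hp).2 V ?_
      funext i
      have hV0i : 0 ≤ V i := hV0 i
      by_cases h : p i = l i
      · have h1 := (heq i).1 h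
        rw [h] at h1
        simp only [h, if_true, mul_one]
        rw [← h1, max_eq_left hV0i]
      · simp [h, (heq i).2 h]
    refine ⟨fun i => decide (p i = l i), hp, ?_⟩
    funext i
    simp only [← hVH]
    have hli := hlim i
    have hpl : p i ≤ l i := hp.2 i
    by_cases h : p i = l i
    · have h2 : ¬ (e i + P.transpose.mulVec p i + Th.transpose.mulVec V i < l i) := by
        rw [← h]; exact not_lt.2 hli
      simp only [h, h2, decide_true, if_true, if_false]
      ring
    · have h3 := (hprio i).resolve_left h
      simp only [h, decide_false]
      rw [← h3]
      simp [hpl]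
  · rintro ⟨b, hp, hfix⟩
    refine ⟨H p, (hClearing p (H p)).2 ?_⟩
    have hHi := fun i => congrFun (hH p hp).1 i
    have hfi := fun i => congrFun hfix i
    simp only at hHi hfi
    have hH0 : ∀ i, 0 ≤ H p i := by
      intro i
      rw [hHi i]
      refine mul_nonneg (le_max_right _ _) ?_
      split_ifs <;> norm_num
    have hA : ∀ i, 0 ≤ P.transpose.mulVec p i := fun i => by
      simp only [Matrix.mulVec, dotProduct, Matrix.transpose_apply]
      exact Finset.sum_nonneg fun j _ => mul_nonneg (hP j i) (hp.1 j)
    have hB : ∀ i, 0 ≤ Th.transpose.mulVec (H p) i := fun i => by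
      simp only [Matrix.mulVec, dotProduct, Matrix.transpose_apply]
      exact Finset.sum_nonneg fun j _ => mul_nonneg (hTh j i) (hH0 j)
    have hyx : ∀ i, α * e i + β * P.transpose.mulVec p i + γ * Th.transpose.mulVec (H p) i ≤
        e i + P.transpose.mulVec p i + Th.transpose.mulVec (H p) i := fun i =>
      add_le_add (add_le_add (mul_le_of_le_one_left (he i) hα.2)
        (mul_le_of_le_one_left (hA i) hβ.2)) (mul_le_of_le_one_left (hB i) hγ.2)
    have key : ∀ i, p i ≤ e i + P.transpose.mulVec p i + Th.transpose.mulVec (H p) i ∧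
        (p i = l i ∨ p i = α * e i + β * P.transpose.mulVec p i
          + γ * Th.transpose.mulVec (H p) i) := by
      intro i
      have h1 := hfi i
      have h2 := hyx i
      generalize e i + P.transpose.mulVec p i + Th.transpose.mulVec (H p) i = x at h1 h2 ⊢
      generalize α * e i + β * P.transpose.mulVec p i
          + γ * Th.transpose.mulVec (H p) i = y at h1 h2 ⊢
      split_ifs at h1 with hb hd
      · have : p i = y := by linarith
        exact ⟨by linarith, Or.inr this⟩
      · have : p i = l i := by linarith
        exact ⟨by linarith, Or.inl this⟩
      · refine ⟨h1.le.trans ((min_le_left _ _).trans h2), ?_⟩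
        rcases min_choice y (l i) with h | h
        · exact Or.inr (h1.trans h)
        · exact Or.inl (h1.trans h)
    refine ⟨hp, hH0, fun i => (key i).1, fun i => (key i).2, fun i => ⟨fun h => ?_, fun h => ?_⟩⟩
    · have h1 := hHi i
      rw [if_pos h, mul_one, max_eq_left (by linarith [(key i).1]), ← h] at h1
      exact h1
    · rw [hHi i, if_neg h, mul_zero]
end

section
/- Let 𝟘 = (0,…,0) and 𝟙 = (1,…,1) in {0,1}^N, and let p̲ be the minimal fixpoint of F_𝟘 in [0,l] and p̄ the maximal fixpoint of F_𝟙 in [0,l]. Then p̲ is the minimal element of S and p̄ is the maximal element of S: p̲, p̄ ∈ S and p̲ ≤ p ≤ p̄ for every p ∈ S. -/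
open Matrix

theorem kt_aux {N : ℕ} (a b : Fin N → ℝ) (hab : a ≤ b) (f : (Fin N → ℝ) → Fin N → ℝ)
    (hm : ∀ u ∈ Set.Icc a b, ∀ w ∈ Set.Icc a b, u ≤ w → f u ≤ f w)
    (ha : a ≤ f a) (hb : f b ≤ b) : ∃ q ∈ Set.Icc a b, q = f q := by
  have haI : a ∈ Set.Icc a b := ⟨le_refl _, hab⟩
  have hbI : b ∈ Set.Icc a b := ⟨hab, le_refl _⟩
  let A : Set (Fin N → ℝ) := {z | z ∈ Set.Icc a b ∧ f z ≤ z}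
  let q : Fin N → ℝ := fun i => sInf ((fun z : Fin N → ℝ => z i) '' A)
  have hbA : b ∈ A := ⟨hbI, hb⟩
  have hql : ∀ z ∈ A, q ≤ z := fun z hz i =>
    csInf_le ⟨a i, by rintro _ ⟨w, hw, rfl⟩; exact hw.1.1 i⟩ ⟨z, hz, rfl⟩
  have hqg : ∀ c : Fin N → ℝ, (∀ z ∈ A, c ≤ z) → c ≤ q := fun c hc i =>
    le_csInf ⟨_, b, hbA, rfl⟩ (by rintro _ ⟨w, hw, rfl⟩; exact hc w hw i)
  have hqI : q ∈ Set.Icc a b := ⟨hqg a fun z hz => hz.1.1, hql b hbA⟩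
  have h1 : f q ≤ q := hqg _ fun z hz => (hm q hqI z hz.1 (hql z hz)).trans hz.2
  have hfI : f q ∈ Set.Icc a b := ⟨ha.trans (hm a haI q hqI hqI.1), h1.trans hqI.2⟩
  exact ⟨q, hqI, le_antisymm (hql _ ⟨hfI, hm _ hfI _ hqI h1⟩) h1⟩

theorem mv_mono {N : ℕ} (M : Matrix (Fin N) (Fin N) ℝ) (hM : ∀ i j, 0 ≤ M i j)
    {u w : Fin N → ℝ} (h : u ≤ w) (i : Fin N) :
    M.transpose.mulVec u i ≤ M.transpose.mulVec w i := by
  simp only [Matrix.mulVec, dotProduct, Matrix.transpose_apply]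
  exact Finset.sum_le_sum fun j _ => mul_le_mul_of_nonneg_left (h j) (hM j i)

theorem mv_nonneg {N : ℕ} (M : Matrix (Fin N) (Fin N) ℝ) (hM : ∀ i j, 0 ≤ M i j)
    {u : Fin N → ℝ} (h : 0 ≤ u) (i : Fin N) : 0 ≤ M.transpose.mulVec u i := by
  simpa using mv_mono M hM h i

/-- Let `𝟘` and `𝟙` be the all-zeros and all-ones binary vectors, and let
`p̲` be the minimal fixpoint of `F_𝟘` in `[0,l]` and `p̄` the maximal fixpoint of
`F_𝟙` in `[0,l]`. Then `p̲` is the minimal element of `S` and `p̄` is the maximal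
element of `S`: `p̲, p̄ ∈ S` and `p̲ ≤ p ≤ p̄` for every `p ∈ S`. -/
theorem stmt8 (N : ℕ) (hN : 1 < N)
    (e l : Fin N → ℝ) (he : 0 ≤ e) (hl : 0 ≤ l)
    (P Th : Matrix (Fin N) (Fin N) ℝ)
    (hP : ∀ i j, 0 ≤ P i j) (hProw : ∀ i, ∑ j, P i j = 1)
    (hTh : ∀ i j, 0 ≤ Th i j) (hThrow : ∀ i, ∑ j, Th i j ≤ 1)
    (α β γ : ℝ) (hα : α ∈ Set.Icc (0:ℝ) 1) (hβ : β ∈ Set.Icc (0:ℝ) 1)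
    (hγ : γ ∈ Set.Icc (0:ℝ) 1)
    (Clearing : (Fin N → ℝ) → (Fin N → ℝ) → Prop)
    (hClearing : ∀ p V : Fin N → ℝ, Clearing p V ↔
      (p ∈ Set.Icc (0 : Fin N → ℝ) l ∧ 0 ≤ V ∧
      (∀ i, p i ≤ e i + P.transpose.mulVec p i + Th.transpose.mulVec V i) ∧
      (∀ i, p i = l i ∨
        p i = α * e i + β * P.transpose.mulVec p i + γ * Th.transpose.mulVec V i) ∧
      (∀ i, (p i = l i →
          V i = e i + P.transpose.mulVec p i + Th.transpose.mulVec V i - p i) ∧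
        (p i ≠ l i → V i = 0))))
    (S : Set (Fin N → ℝ))
    (hS : S = {p : Fin N → ℝ | ∃ V : Fin N → ℝ, Clearing p V})
    (Gp : (Fin N → ℝ) → (Fin N → ℝ) → Fin N → ℝ)
    (hGp : Gp = fun u V i =>
      max (e i + P.transpose.mulVec u i + Th.transpose.mulVec V i - l i) 0 *
        (if u i = l i then (1 : ℝ) else 0))
    (H : (Fin N → ℝ) → Fin N → ℝ)
    (hH : ∀ u ∈ Set.Icc (0 : Fin N → ℝ) l,
      H u = Gp u (H u) ∧ ∀ W : Fin N → ℝ, W = Gp u W → W = H u)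
    (F : (Fin N → Bool) → (Fin N → ℝ) → Fin N → ℝ)
    (hF : F = fun b p i =>
      let V := H p
      let xi := e i + P.transpose.mulVec p i + Th.transpose.mulVec V i
      let yi := α * e i + β * P.transpose.mulVec p i + γ * Th.transpose.mulVec V i
      let di : ℝ := if xi < l i then 1 else 0
      if b i then yi * di + l i * (1 - di) else min yi (l i))
    (plow pbar : Fin N → ℝ)
    -- `plow` is the minimal fixpoint of `F_𝟘` in `[0,l]`
    (hplow : plow ∈ Set.Icc (0 : Fin N → ℝ) l ∧ plow = F (fun _ => false) plow ∧
      ∀ q ∈ Set.Icc (0 : Fin N → ℝ) l, q = F (fun _ => false) q → plow ≤ q)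
    -- `pbar` is the maximal fixpoint of `F_𝟙` in `[0,l]`
    (hpbar : pbar ∈ Set.Icc (0 : Fin N → ℝ) l ∧ pbar = F (fun _ => true) pbar ∧
      ∀ q ∈ Set.Icc (0 : Fin N → ℝ) l, q = F (fun _ => true) q → q ≤ pbar) :
    plow ∈ S ∧ pbar ∈ S ∧ ∀ p ∈ S, plow ≤ p ∧ p ≤ pbar := by
  have hGm : ∀ u w V W : Fin N → ℝ, u ≤ w → w ≤ l → V ≤ W → Gp u V ≤ Gp w W := by
    intro u w V W huw hwl hVW i
    have h1 := mv_mono P hP huw i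
    have h2 := mv_mono Th hTh hVW i
    simp only [hGp]
    by_cases hu : u i = l i
    · have hw : w i = l i := le_antisymm (hwl i) (hu ▸ huw i)
      simp only [hu, hw, if_true, mul_one]
      exact max_le_max (by linarith) le_rfl
    · simp only [hu, if_false, mul_zero]
      split_ifs <;> simp
  have hG0 : ∀ u V : Fin N → ℝ, 0 ≤ Gp u V := by
    intro u V i
    simp only [hGp]
    split_ifs <;> simp
  have hH0 : ∀ u ∈ Set.Icc (0 : Fin N → ℝ) l, 0 ≤ H u := fun u hu => by
    rw [(hH u hu).1]; exact hG0 _ _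
  have hHm : ∀ u ∈ Set.Icc (0 : Fin N → ℝ) l, ∀ w ∈ Set.Icc (0 : Fin N → ℝ) l,
      u ≤ w → H u ≤ H w := by
    intro u hu w hw huw
    obtain ⟨q, hq, hqe⟩ := kt_aux 0 (H w) (hH0 w hw) (Gp u)
      (fun V _ W _ h => hGm u u V W le_rfl hu.2 h) (hG0 _ _)
      (by conv_rhs => rw [(hH w hw).1]
          exact hGm u w _ _ huw hw.2 le_rfl)
    rw [← (hH u hu).2 q hqe]; exact hq.2
  have hHl : ∀ u ∈ Set.Icc (0 : Fin N → ℝ) l, ∀ i, u i = l i →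
      H u i = max (e i + P.transpose.mulVec u i + Th.transpose.mulVec (H u) i - l i) 0 := by
    intro u hu i hi
    have := congrFun (hH u hu).1 i
    simpa [hGp, hi] using this
  have hHn : ∀ u ∈ Set.Icc (0 : Fin N → ℝ) l, ∀ i, u i ≠ l i → H u i = 0 := by
    intro u hu i hi
    have := congrFun (hH u hu).1 i
    simpa [hGp, hi] using this
  have hF0 : ∀ p i, F (fun _ => false) p i =
      min (α * e i + β * P.transpose.mulVec p i + γ * Th.transpose.mulVec (H p) i) (l i) := by
    intro p i; simp [hF]
  have hF1a : ∀ p i, e i + P.transpose.mulVec p i + Th.transpose.mulVec (H p) i < l i →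
      F (fun _ => true) p i =
      α * e i + β * P.transpose.mulVec p i + γ * Th.transpose.mulVec (H p) i := by
    intro p i h; simp [hF, h]
  have hF1b : ∀ p i, l i ≤ e i + P.transpose.mulVec p i + Th.transpose.mulVec (H p) i →
      F (fun _ => true) p i = l i := by
    intro p i h; simp [hF, not_lt.mpr h]
  have hyx : ∀ p ∈ Set.Icc (0 : Fin N → ℝ) l, ∀ i,
      α * e i + β * P.transpose.mulVec p i + γ * Th.transpose.mulVec (H p) i ≤
      e i + P.transpose.mulVec p i + Th.transpose.mulVec (H p) i := by
    intro p hp i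
    have h1 := mul_le_of_le_one_left (he i) hα.2
    have h2 := mul_le_of_le_one_left (mv_nonneg P hP hp.1 i) hβ.2
    have h3 := mul_le_of_le_one_left (mv_nonneg Th hTh (hH0 p hp) i) hγ.2
    simp only [Pi.zero_apply] at *
    linarith
  have hy0 : ∀ p ∈ Set.Icc (0 : Fin N → ℝ) l, ∀ i,
      0 ≤ α * e i + β * P.transpose.mulVec p i + γ * Th.transpose.mulVec (H p) i := by
    intro p hp i
    have h1 := mul_nonneg hα.1 (he i)
    have h2 := mul_nonneg hβ.1 (mv_nonneg P hP hp.1 i)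
    have h3 := mul_nonneg hγ.1 (mv_nonneg Th hTh (hH0 p hp) i)
    linarith
  have hxm : ∀ u ∈ Set.Icc (0 : Fin N → ℝ) l, ∀ w ∈ Set.Icc (0 : Fin N → ℝ) l, u ≤ w → ∀ i,
      e i + P.transpose.mulVec u i + Th.transpose.mulVec (H u) i ≤
      e i + P.transpose.mulVec w i + Th.transpose.mulVec (H w) i := by
    intro u hu w hw huw i
    have h1 := mv_mono P hP huw i
    have h2 := mv_mono Th hTh (hHm u hu w hw huw) i
    linarith
  have hym : ∀ u ∈ Set.Icc (0 : Fin N → ℝ) l, ∀ w ∈ Set.Icc (0 : Fin N → ℝ) l, u ≤ w → ∀ i,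
      α * e i + β * P.transpose.mulVec u i + γ * Th.transpose.mulVec (H u) i ≤
      α * e i + β * P.transpose.mulVec w i + γ * Th.transpose.mulVec (H w) i := by
    intro u hu w hw huw i
    have h1 := mul_le_mul_of_nonneg_left (mv_mono P hP huw i) hβ.1
    have h2 := mul_le_mul_of_nonneg_left (mv_mono Th hTh (hHm u hu w hw huw) i) hγ.1
    linarith
  obtain ⟨hlI, hlf, hlmin⟩ := hplow
  obtain ⟨hbI, hbf, hbmax⟩ := hpbar
  subst hS
  refine ⟨⟨H plow, (hClearing _ _).2 ⟨hlI, hH0 _ hlI, ?_, ?_, ?_⟩⟩,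
    ⟨H pbar, (hClearing _ _).2 ⟨hbI, hH0 _ hbI, ?_, ?_, ?_⟩⟩, ?_⟩
  · intro i
    have h := (congrFun hlf i).trans (hF0 plow i)
    exact (h.le.trans (min_le_left _ _)).trans (hyx plow hlI i)
  · intro i
    have h := (congrFun hlf i).trans (hF0 plow i)
    rcases min_choice (α * e i + β * P.transpose.mulVec plow i
      + γ * Th.transpose.mulVec (H plow) i) (l i) with h' | h'
    · right; exact h.trans h'
    · left; exact h.trans h'
  · intro i
    refine ⟨fun hi => ?_, hHn plow hlI i⟩
    have h := (congrFun hlf i).trans (hF0 plow i)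
    have h2 := (h.le.trans (min_le_left _ _)).trans (hyx plow hlI i)
    have h3 := hHl plow hlI i hi
    rw [max_eq_left (by linarith)] at h3
    rw [hi]; exact h3
  · intro i
    rcases lt_or_ge (e i + P.transpose.mulVec pbar i + Th.transpose.mulVec (H pbar) i) (l i)
      with h | h
    · exact ((congrFun hbf i).trans (hF1a pbar i h)).le.trans (hyx pbar hbI i)
    · exact ((congrFun hbf i).trans (hF1b pbar i h)).le.trans h
  · intro i
    rcases lt_or_ge (e i + P.transpose.mulVec pbar i + Th.transpose.mulVec (H pbar) i) (l i)
      with h | h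
    · right; exact (congrFun hbf i).trans (hF1a pbar i h)
    · left; exact (congrFun hbf i).trans (hF1b pbar i h)
  · intro i
    refine ⟨fun hi => ?_, hHn pbar hbI i⟩
    have h2 : l i ≤ e i + P.transpose.mulVec pbar i + Th.transpose.mulVec (H pbar) i := by
      by_contra h
      have h4 := (congrFun hbf i).trans (hF1a pbar i (not_le.1 h))
      have h5 := hyx pbar hbI i
      linarith
    have h3 := hHl pbar hbI i hi
    rw [max_eq_left (by linarith)] at h3
    rw [hi]; exact h3
  · rintro p ⟨V, hV⟩
    obtain ⟨hpI, hV0, hll, hap, heq⟩ := (hClearing p V).1 hV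
    have hVH : V = H p := by
      refine (hH p hpI).2 V ?_
      funext i
      simp only [hGp]
      by_cases hi : p i = l i
      · have h1 := (heq i).1 hi
        have h2 : 0 ≤ V i := hV0 i
        rw [if_pos hi, mul_one, ← hi, max_eq_left (by linarith)]
        exact h1
      · rw [if_neg hi, mul_zero]; exact (heq i).2 hi
    subst hVH
    constructor
    · have hsub : ∀ u ∈ Set.Icc (0 : Fin N → ℝ) p, u ∈ Set.Icc (0 : Fin N → ℝ) l :=
        fun u hu => ⟨hu.1, hu.2.trans hpI.2⟩
      obtain ⟨q, hq, hqe⟩ := kt_aux 0 p hpI.1 (F fun _ => false)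
        (fun u hu w hw huw i => by
          rw [hF0, hF0]
          exact min_le_min (hym u (hsub u hu) w (hsub w hw) huw i) le_rfl)
        (fun i => by
          rw [hF0]
          exact le_min (hy0 0 ⟨le_rfl, hl⟩ i) (hl i))
        (fun i => by
          rw [hF0]
          rcases hap i with h | h
          · exact (min_le_right _ _).trans h.ge
          · exact (min_le_left _ _).trans h.ge)
      exact (hlmin q (hsub q hq) hqe).trans hq.2
    · have hsub : ∀ u ∈ Set.Icc p l, u ∈ Set.Icc (0 : Fin N → ℝ) l :=
        fun u hu => ⟨hpI.1.trans hu.1, hu.2⟩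
      have hFl : ∀ u ∈ Set.Icc (0 : Fin N → ℝ) l, F (fun _ => true) u ≤ l := by
        intro u hu i
        rcases lt_or_ge (e i + P.transpose.mulVec u i + Th.transpose.mulVec (H u) i) (l i)
          with h | h
        · rw [hF1a u i h]; exact (hyx u hu i).trans h.le
        · rw [hF1b u i h]
      obtain ⟨q, hq, hqe⟩ := kt_aux p l hpI.2 (F fun _ => true)
        (fun u hu w hw huw i => by
          rcases lt_or_ge (e i + P.transpose.mulVec w i + Th.transpose.mulVec (H w) i) (l i)
            with h | h
          · rw [hF1a w i h, hF1a u i ((hxm u (hsub u hu) w (hsub w hw) huw i).trans_lt h)]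
            exact hym u (hsub u hu) w (hsub w hw) huw i
          · rw [hF1b w i h]; exact hFl u (hsub u hu) i)
        (fun i => by
          rcases lt_or_ge (e i + P.transpose.mulVec p i + Th.transpose.mulVec (H p) i) (l i)
            with h | h
          · rw [hF1a p i h]
            rcases hap i with h' | h'
            · have := hll i
              linarith
            · exact h'.le
          · rw [hF1b p i h]; exact hpI.2 i)
        (hFl l ⟨hl, le_rfl⟩)
      exact hq.1.trans (hbmax q (hsub q hq) hqe)
end

section
/- If (p,V) is a clearing pair with V ≤ κ·1 componentwise, then the triple (1_{p=l}, p, V) is admissible for problem P1. -/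
open Matrix

/-- If `(p,V)` is a clearing pair with `V ≤ κ·1` componentwise, then the
triple `(1_{p=l}, p, V)` is admissible for problem P1. -/
theorem stmt9 (N : ℕ) (hN : 1 < N)
    (e l : Fin N → ℝ) (he : 0 ≤ e) (hl : 0 ≤ l)
    (P Th : Matrix (Fin N) (Fin N) ℝ)
    (hP : ∀ i j, 0 ≤ P i j) (hProw : ∀ i, ∑ j, P i j = 1)
    (hTh : ∀ i j, 0 ≤ Th i j) (hThrow : ∀ i, ∑ j, Th i j ≤ 1)
    (α β γ : ℝ) (hα : α ∈ Set.Icc (0:ℝ) 1) (hβ : β ∈ Set.Icc (0:ℝ) 1)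
    (hγ : γ ∈ Set.Icc (0:ℝ) 1)
    (hInv : IsUnit (1 - Th.transpose))
    (hInvNonneg : ∀ i j, 0 ≤ (1 - Th.transpose)⁻¹ i j)
    (K : Fin N → ℝ)
    (hK : K = (1 - Th.transpose)⁻¹.mulVec
      (fun i => max (e i + P.transpose.mulVec l i - l i) 0))
    (κ : ℝ) (hκ : κ = ⨆ i, K i)
    -- admissibility for problem P1
    (Adm1 : (Fin N → ℝ) → (Fin N → ℝ) → (Fin N → ℝ) → Prop)
    (hAdm1 : ∀ a p V : Fin N → ℝ, Adm1 a p V ↔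
      ((∀ i, a i = 0 ∨ a i = 1) ∧ p ∈ Set.Icc (0 : Fin N → ℝ) l ∧ 0 ≤ V ∧
      (∀ i, p i ≤ α * e i + β * P.transpose.mulVec p i + γ * Th.transpose.mulVec V i
        + a i * l i) ∧
      (∀ i, a i * l i ≤ e i + P.transpose.mulVec p i + Th.transpose.mulVec V i) ∧
      (∀ i, V i ≤ e i + P.transpose.mulVec p i + Th.transpose.mulVec V i - a i * l i) ∧
      (∀ i, V i ≤ κ * a i)))
    (p V : Fin N → ℝ)
    -- `(p,V)` is a clearing pair
    (hpIcc : p ∈ Set.Icc (0 : Fin N → ℝ) l) (hV : 0 ≤ V)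
    (hLL : ∀ i, p i ≤ e i + P.transpose.mulVec p i + Th.transpose.mulVec V i)
    (hAP : ∀ i, p i = l i ∨
      p i = α * e i + β * P.transpose.mulVec p i + γ * Th.transpose.mulVec V i)
    (hEE : ∀ i,
      (p i = l i → V i = e i + P.transpose.mulVec p i + Th.transpose.mulVec V i - p i) ∧
      (p i ≠ l i → V i = 0))
    (hVκ : ∀ i, V i ≤ κ) :
    Adm1 (fun i => if p i = l i then (1 : ℝ) else 0) p V := by
  have h1 : ∀ i, 0 ≤ P.transpose.mulVec p i := fun i => by
    simp only [Matrix.mulVec, dotProduct, Matrix.transpose_apply]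
    exact Finset.sum_nonneg fun j _ => mul_nonneg (hP j i) (hpIcc.1 j)
  have h2 : ∀ i, 0 ≤ Th.transpose.mulVec V i := fun i => by
    simp only [Matrix.mulVec, dotProduct, Matrix.transpose_apply]
    exact Finset.sum_nonneg fun j _ => mul_nonneg (hTh j i) (hV j)
  have he' : ∀ i, 0 ≤ e i := fun i => he i
  rw [hAdm1]
  refine ⟨fun i => ?_, hpIcc, hV, fun i => ?_, fun i => ?_, fun i => ?_, fun i => ?_⟩
  · by_cases h : p i = l i <;> simp [h]
  · have a1 := mul_nonneg hα.1 (he' i)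
    have a2 := mul_nonneg hβ.1 (h1 i)
    have a3 := mul_nonneg hγ.1 (h2 i)
    by_cases h : p i = l i
    · simp only [h, if_true]; linarith
    · have := (hAP i).resolve_left h
      simp only [h, if_false]; linarith
  · have := hLL i
    have := h1 i
    have := h2 i
    have := he' i
    by_cases h : p i = l i
    · simp only [h, if_true]; linarith
    · simp only [h, if_false]; linarith
  · have := h1 i
    have := h2 i
    have := he' i
    by_cases h : p i = l i
    · have := (hEE i).1 h
      simp only [h, if_true]; linarith
    · have := (hEE i).2 h
      simp only [h, if_false]; linarith
  · by_cases h : p i = l i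
    · have := hVκ i
      simp only [h, if_true]; linarith
    · have := (hEE i).2 h
      simp only [h, if_false]; linarith
end

section
/- If (â,p̂,V̂) is optimal for problem P1 (admissible, with f(â,p̂,V̂) ≥ f(a,p,V) for every admissible (a,p,V)), then â = 1_{p̂=l}, i.e., âⁱ = 1 if p̂ⁱ = lⁱ and âⁱ = 0 if p̂ⁱ < lⁱ. -/
open Matrix

/-- If `(â,p̂,V̂)` is optimal for problem P1 (admissible, maximizing `f`
over admissible triples), then `â = 1_{p̂=l}`: `âⁱ = 1` if `p̂ⁱ = lⁱ` and `âⁱ = 0`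
if `p̂ⁱ < lⁱ`. -/
theorem stmt10 (N : ℕ) (hN : 1 < N)
    (e l : Fin N → ℝ) (he : 0 ≤ e) (hl : 0 ≤ l)
    (P Th : Matrix (Fin N) (Fin N) ℝ)
    (hP : ∀ i j, 0 ≤ P i j) (hProw : ∀ i, ∑ j, P i j = 1)
    (hTh : ∀ i j, 0 ≤ Th i j) (hThrow : ∀ i, ∑ j, Th i j ≤ 1)
    (α β γ : ℝ) (hα : α ∈ Set.Icc (0:ℝ) 1) (hβ : β ∈ Set.Icc (0:ℝ) 1)
    (hγ : γ ∈ Set.Icc (0:ℝ) 1)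
    (hInv : IsUnit (1 - Th.transpose))
    (hInvNonneg : ∀ i j, 0 ≤ (1 - Th.transpose)⁻¹ i j)
    (K : Fin N → ℝ)
    (hK : K = (1 - Th.transpose)⁻¹.mulVec
      (fun i => max (e i + P.transpose.mulVec l i - l i) 0))
    (κ : ℝ) (hκ : κ = ⨆ i, K i)
    (f₁ f₂ f₃ : Fin N → ℝ)
    (hf₁ : ∀ i, 0 < f₁ i) (hf₂ : ∀ i, 0 < f₂ i) (hf₃ : ∀ i, 0 < f₃ i)
    (f : (Fin N → ℝ) → (Fin N → ℝ) → (Fin N → ℝ) → ℝ)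
    (hf : f = fun a p V => ∑ i, (f₁ i * a i + f₂ i * p i + f₃ i * V i))
    (Adm1 : (Fin N → ℝ) → (Fin N → ℝ) → (Fin N → ℝ) → Prop)
    (hAdm1 : ∀ a p V : Fin N → ℝ, Adm1 a p V ↔
      ((∀ i, a i = 0 ∨ a i = 1) ∧ p ∈ Set.Icc (0 : Fin N → ℝ) l ∧ 0 ≤ V ∧
      (∀ i, p i ≤ α * e i + β * P.transpose.mulVec p i + γ * Th.transpose.mulVec V i
        + a i * l i) ∧
      (∀ i, a i * l i ≤ e i + P.transpose.mulVec p i + Th.transpose.mulVec V i) ∧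
      (∀ i, V i ≤ e i + P.transpose.mulVec p i + Th.transpose.mulVec V i - a i * l i) ∧
      (∀ i, V i ≤ κ * a i)))
    (ahat phat Vhat : Fin N → ℝ)
    (hAdm : Adm1 ahat phat Vhat)
    (hOpt : ∀ a p V : Fin N → ℝ, Adm1 a p V → f a p V ≤ f ahat phat Vhat) :
    ahat = fun i => if phat i = l i then (1 : ℝ) else 0 := by
  have hmv : ∀ (M : Matrix (Fin N) (Fin N) ℝ), (∀ i j, 0 ≤ M i j) →
      ∀ u w : Fin N → ℝ, (∀ i, u i ≤ w i) → ∀ i, M.mulVec u i ≤ M.mulVec w i := by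
    intro M hM u w huw i
    simp only [Matrix.mulVec, dotProduct]
    exact Finset.sum_le_sum fun j _ => mul_le_mul_of_nonneg_left (huw j) (hM i j)
  have hmv0 : ∀ (M : Matrix (Fin N) (Fin N) ℝ), (∀ i j, 0 ≤ M i j) →
      ∀ w : Fin N → ℝ, (∀ i, 0 ≤ w i) → ∀ i, 0 ≤ M.mulVec w i := by
    intro M hM w hw i
    simp only [Matrix.mulVec, dotProduct]
    exact Finset.sum_nonneg fun j _ => mul_nonneg (hM i j) (hw j)
  have hPt : ∀ i j, 0 ≤ P.transpose i j := fun i j => hP j i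
  have hTt : ∀ i j, 0 ≤ Th.transpose i j := fun i j => hTh j i
  have hκ0 : 0 ≤ κ := by
    rw [hκ]
    apply Real.iSup_nonneg
    intro i
    rw [hK]
    exact hmv0 _ hInvNonneg _ (fun i => le_max_right _ _) i
  obtain ⟨ha, ⟨hp0, hpl⟩, hV0, h1, h2, h3, h4⟩ := (hAdm1 _ _ _).1 hAdm
  have hPp := hmv0 _ hPt phat hp0
  have hTV := hmv0 _ hTt Vhat hV0
  have hy0 : ∀ i, 0 ≤ α * e i + β * P.transpose.mulVec phat i
      + γ * Th.transpose.mulVec Vhat i := fun i =>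
    add_nonneg (add_nonneg (mul_nonneg hα.1 (he i)) (mul_nonneg hβ.1 (hPp i)))
      (mul_nonneg hγ.1 (hTV i))
  have hyx : ∀ i, α * e i + β * P.transpose.mulVec phat i + γ * Th.transpose.mulVec Vhat i
      ≤ e i + P.transpose.mulVec phat i + Th.transpose.mulVec Vhat i := fun i =>
    add_le_add (add_le_add (mul_le_of_le_one_left (he i) hα.2)
      (mul_le_of_le_one_left (hPp i) hβ.2)) (mul_le_of_le_one_left (hTV i) hγ.2)
  funext i
  split_ifs with hi
  · by_contra hne
    have hai : ahat i = 0 := (ha i).resolve_right hne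
    have hVi : Vhat i = 0 := by
      have := h4 i
      rw [hai, mul_zero] at this
      exact le_antisymm this (hV0 i)
    have hlx := hyx i
    have hly := h1 i
    rw [hai, hi] at hly
    have hadm : Adm1 (Function.update ahat i 1) phat Vhat := by
      refine (hAdm1 _ _ _).2 ⟨?_, ⟨hp0, hpl⟩, hV0, ?_, ?_, ?_, ?_⟩ <;> intro j <;>
        by_cases hj : j = i
      · subst hj; simp
      · simpa [hj] using ha j
      · subst hj; have := hy0 j; simp only [Function.update_self]; linarith
      · simpa [hj] using h1 j
      · subst hj; simp only [Function.update_self]; linarith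
      · simpa [hj] using h2 j
      · subst hj; simp only [Function.update_self]; linarith
      · simpa [hj] using h3 j
      · subst hj; simp only [Function.update_self]; linarith
      · simpa [hj] using h4 j
    have hle := hOpt _ _ _ hadm
    rw [hf] at hle
    refine absurd hle (not_le.2 (Finset.sum_lt_sum ?_ ⟨i, Finset.mem_univ i, ?_⟩))
    · intro j _
      by_cases hj : j = i
      · subst hj; have := hf₁ j; simp only [Function.update_self]; rw [hai]; linarith
      · simp [hj]
    · have := hf₁ i; simp only [Function.update_self]; rw [hai]; linarith
  · by_contra hne
    have hai : ahat i = 1 := (ha i).resolve_left hne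
    have hlt : phat i < l i := lt_of_le_of_ne (hpl i) hi
    have hge : ∀ j, phat j ≤ Function.update phat i (l i) j := by
      intro j
      by_cases hj : j = i
      · subst hj; simpa using hlt.le
      · simp [hj]
    have hPm := hmv _ hPt _ _ hge
    have hβm : ∀ j, β * P.transpose.mulVec phat j
        ≤ β * P.transpose.mulVec (Function.update phat i (l i)) j :=
      fun j => mul_le_mul_of_nonneg_left (hPm j) hβ.1
    have hadm : Adm1 ahat (Function.update phat i (l i)) Vhat := by
      refine (hAdm1 _ _ _).2 ⟨ha, ⟨fun j => (hp0 j).trans (hge j), ?_⟩, hV0, ?_, ?_, ?_, h4⟩ <;>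
        intro j
      · by_cases hj : j = i
        · subst hj; simp
        · simpa [hj] using hpl j
      · have hb := hβm j
        by_cases hj : j = i
        · subst hj
          have := hy0 j
          rw [Function.update_self, hai]
          linarith
        · have := h1 j
          rw [Function.update_of_ne hj]
          linarith
      · have := hPm j; have := h2 j; linarith
      · have := hPm j; have := h3 j; linarith
    have hle := hOpt _ _ _ hadm
    rw [hf] at hle
    refine absurd hle (not_le.2 (Finset.sum_lt_sum ?_ ⟨i, Finset.mem_univ i, ?_⟩))
    · intro j _
      have := mul_le_mul_of_nonneg_left (hge j) (hf₂ j).le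
      linarith
    · have := mul_lt_mul_of_pos_left hlt (hf₂ i)
      simp only [Function.update_self]; linarith
end

section
/- If (â,p̂,V̂) is optimal for problem P1, then (p̂,V̂) is a clearing pair, and it is maximal: for every clearing pair (p,V) with V ≤ κ·1 one has p ≤ p̂ and V ≤ V̂. -/
open Matrix

theorem mv_mono11 {N : ℕ} (A : Matrix (Fin N) (Fin N) ℝ) (hA : ∀ i j, 0 ≤ A i j)
    (u v : Fin N → ℝ) (h : ∀ i, u i ≤ v i) (i : Fin N) : A.mulVec u i ≤ A.mulVec v i := by
  simp only [Matrix.mulVec, dotProduct]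
  exact Finset.sum_le_sum fun j _ => mul_le_mul_of_nonneg_left (h j) (hA i j)

/-- If `(â,p̂,V̂)` is optimal for problem P1, then `(p̂,V̂)` is a clearing
pair, and it is maximal: for every clearing pair `(p,V)` with `V ≤ κ·1` one has
`p ≤ p̂` and `V ≤ V̂`. -/
theorem stmt11 (N : ℕ) (hN : 1 < N)
    (e l : Fin N → ℝ) (he : 0 ≤ e) (hl : 0 ≤ l)
    (P Th : Matrix (Fin N) (Fin N) ℝ)
    (hP : ∀ i j, 0 ≤ P i j) (hProw : ∀ i, ∑ j, P i j = 1)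
    (hTh : ∀ i j, 0 ≤ Th i j) (hThrow : ∀ i, ∑ j, Th i j ≤ 1)
    (α β γ : ℝ) (hα : α ∈ Set.Icc (0:ℝ) 1) (hβ : β ∈ Set.Icc (0:ℝ) 1)
    (hγ : γ ∈ Set.Icc (0:ℝ) 1)
    (hInv : IsUnit (1 - Th.transpose))
    (hInvNonneg : ∀ i j, 0 ≤ (1 - Th.transpose)⁻¹ i j)
    (K : Fin N → ℝ)
    (hK : K = (1 - Th.transpose)⁻¹.mulVec
      (fun i => max (e i + P.transpose.mulVec l i - l i) 0))
    (κ : ℝ) (hκ : κ = ⨆ i, K i)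
    (f₁ f₂ f₃ : Fin N → ℝ)
    (hf₁ : ∀ i, 0 < f₁ i) (hf₂ : ∀ i, 0 < f₂ i) (hf₃ : ∀ i, 0 < f₃ i)
    (f : (Fin N → ℝ) → (Fin N → ℝ) → (Fin N → ℝ) → ℝ)
    (hf : f = fun a p V => ∑ i, (f₁ i * a i + f₂ i * p i + f₃ i * V i))
    (Clearing : (Fin N → ℝ) → (Fin N → ℝ) → Prop)
    (hClearing : ∀ p V : Fin N → ℝ, Clearing p V ↔
      (p ∈ Set.Icc (0 : Fin N → ℝ) l ∧ 0 ≤ V ∧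
      (∀ i, p i ≤ e i + P.transpose.mulVec p i + Th.transpose.mulVec V i) ∧
      (∀ i, p i = l i ∨
        p i = α * e i + β * P.transpose.mulVec p i + γ * Th.transpose.mulVec V i) ∧
      (∀ i, (p i = l i →
          V i = e i + P.transpose.mulVec p i + Th.transpose.mulVec V i - p i) ∧
        (p i ≠ l i → V i = 0))))
    (Adm1 : (Fin N → ℝ) → (Fin N → ℝ) → (Fin N → ℝ) → Prop)
    (hAdm1 : ∀ a p V : Fin N → ℝ, Adm1 a p V ↔
      ((∀ i, a i = 0 ∨ a i = 1) ∧ p ∈ Set.Icc (0 : Fin N → ℝ) l ∧ 0 ≤ V ∧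
      (∀ i, p i ≤ α * e i + β * P.transpose.mulVec p i + γ * Th.transpose.mulVec V i
        + a i * l i) ∧
      (∀ i, a i * l i ≤ e i + P.transpose.mulVec p i + Th.transpose.mulVec V i) ∧
      (∀ i, V i ≤ e i + P.transpose.mulVec p i + Th.transpose.mulVec V i - a i * l i) ∧
      (∀ i, V i ≤ κ * a i)))
    (ahat phat Vhat : Fin N → ℝ)
    (hAdm : Adm1 ahat phat Vhat)
    (hOpt : ∀ a p V : Fin N → ℝ, Adm1 a p V → f a p V ≤ f ahat phat Vhat) :
    Clearing phat Vhat ∧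
      ∀ p V : Fin N → ℝ, Clearing p V → (∀ i, V i ≤ κ) → p ≤ phat ∧ V ≤ Vhat := by
  have hPt : ∀ i j, 0 ≤ P.transpose i j := fun i j => hP j i
  have hTt : ∀ i j, 0 ≤ Th.transpose i j := fun i j => hTh j i
  have mP := mv_mono11 _ hPt
  have mT := mv_mono11 _ hTt
  have nP : ∀ u : Fin N → ℝ, 0 ≤ u → ∀ i, 0 ≤ P.transpose.mulVec u i := by
    intro u hu i
    have := mP 0 u hu i
    simpa using this
  have nT : ∀ u : Fin N → ℝ, 0 ≤ u → ∀ i, 0 ≤ Th.transpose.mulVec u i := by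
    intro u hu i
    have := mT 0 u hu i
    simpa using this
  obtain ⟨hα0, hα1⟩ := hα
  obtain ⟨hβ0, hβ1⟩ := hβ
  obtain ⟨hγ0, hγ1⟩ := hγ
  -- facts on K
  have hK0 : ∀ i, 0 ≤ K i := by
    intro i
    have := mv_mono11 _ hInvNonneg 0 (fun i => max (e i + P.transpose.mulVec l i - l i) 0)
      (fun i => le_max_right _ _) i
    rw [hK]
    simpa using this
  have hKκ : ∀ i, K i ≤ κ := by
    intro i
    rw [hκ]
    exact le_ciSup (Set.finite_range K).bddAbove i
  have hκ0 : 0 ≤ κ := (hK0 ⟨0, by omega⟩).trans (hKκ _)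
  have hdet : IsUnit (1 - Th.transpose).det := (Matrix.isUnit_iff_isUnit_det _).1 hInv
  have hKfix : ∀ i, K i = max (e i + P.transpose.mulVec l i - l i) 0
      + Th.transpose.mulVec K i := by
    intro i
    have h1 : (1 - Th.transpose).mulVec K
        = fun i => max (e i + P.transpose.mulVec l i - l i) 0 := by
      rw [hK, Matrix.mulVec_mulVec, Matrix.mul_nonsing_inv _ hdet, Matrix.one_mulVec]
    have h2 := congrFun h1 i
    rw [Matrix.sub_mulVec, Matrix.one_mulVec] at h2
    simp only [Pi.sub_apply] at h2
    linarith
  have hVK : ∀ V : Fin N → ℝ, (∀ i, V i ≤ max (e i + P.transpose.mulVec l i - l i) 0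
      + Th.transpose.mulVec V i) → ∀ i, V i ≤ K i := by
    intro V hV i
    have h1 : V = (1 - Th.transpose)⁻¹.mulVec ((1 - Th.transpose).mulVec V) := by
      rw [Matrix.mulVec_mulVec, Matrix.nonsing_inv_mul _ hdet, Matrix.one_mulVec]
    rw [h1, hK]
    refine mv_mono11 _ hInvNonneg _ _ (fun j => ?_) i
    rw [Matrix.sub_mulVec, Matrix.one_mulVec]
    simp only [Pi.sub_apply]
    linarith [hV j]
  -- the optimum is the greatest admissible triple
  have hgr : ∀ a p V : Fin N → ℝ, Adm1 a p V →
      (∀ i, a i ≤ ahat i) ∧ (∀ i, p i ≤ phat i) ∧ (∀ i, V i ≤ Vhat i) := by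
    intro a p V h
    have hj : Adm1 (fun i => max (a i) (ahat i)) (fun i => max (p i) (phat i))
        (fun i => max (V i) (Vhat i)) := by
      rw [hAdm1] at h hAdm ⊢
      obtain ⟨a1, ⟨a2, a3⟩, a4, a5, a6, a7, a8⟩ := h
      obtain ⟨b1, ⟨b2, b3⟩, b4, b5, b6, b7, b8⟩ := hAdm
      have p1 := mP p (fun i => max (p i) (phat i)) (fun i => le_max_left _ _)
      have p2 := mP phat (fun i => max (p i) (phat i)) (fun i => le_max_right _ _)
      have v1 := mT V (fun i => max (V i) (Vhat i)) (fun i => le_max_left _ _)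
      have v2 := mT Vhat (fun i => max (V i) (Vhat i)) (fun i => le_max_right _ _)
      refine ⟨fun i => ?_, ⟨fun i => ?_, fun i => ?_⟩, fun i => ?_, fun i => ?_, fun i => ?_,
        fun i => ?_, fun i => ?_⟩
      · rcases max_choice (a i) (ahat i) with h | h <;> simp only [h]
        · exact a1 i
        · exact b1 i
      · exact (a2 i).trans (le_max_left _ _)
      · exact max_le (a3 i) (b3 i)
      · exact (a4 i).trans (le_max_left _ _)
      · have q1 := mul_le_mul_of_nonneg_left (p1 i) hβ0
        have q2 := mul_le_mul_of_nonneg_left (p2 i) hβ0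
        have w1 := mul_le_mul_of_nonneg_left (v1 i) hγ0
        have w2 := mul_le_mul_of_nonneg_left (v2 i) hγ0
        have r1 := mul_le_mul_of_nonneg_right (le_max_left (a i) (ahat i)) (hl i)
        have r2 := mul_le_mul_of_nonneg_right (le_max_right (a i) (ahat i)) (hl i)
        exact max_le (by linarith [a5 i]) (by linarith [b5 i])
      · rcases max_choice (a i) (ahat i) with h | h <;> simp only [h]
        · linarith [a6 i, p1 i, v1 i]
        · linarith [b6 i, p2 i, v2 i]
      · have := a6 i
        have := b6 i
        have := a7 i
        have := b7 i
        have := a8 i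
        have := b8 i
        have := a4 i
        have := b4 i
        have := p1 i
        have := p2 i
        have := v1 i
        have := v2 i
        simp only [Pi.zero_apply] at *
        rcases a1 i with h | h <;> rcases b1 i with h' | h' <;>
          simp only [h, h', mul_zero, mul_one, zero_mul, one_mul, max_self,
            max_eq_left zero_le_one, max_eq_right zero_le_one] at * <;>
          exact max_le (by linarith) (by linarith)
      · have r1 := mul_le_mul_of_nonneg_left (le_max_left (a i) (ahat i)) hκ0
        have r2 := mul_le_mul_of_nonneg_left (le_max_right (a i) (ahat i)) hκ0
        exact max_le ((a8 i).trans r1) ((b8 i).trans r2)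
    have ho := hOpt _ _ _ hj
    rw [hf] at ho
    simp only at ho
    have hle : ∀ i ∈ Finset.univ, f₁ i * ahat i + f₂ i * phat i + f₃ i * Vhat i ≤
        f₁ i * max (a i) (ahat i) + f₂ i * max (p i) (phat i) + f₃ i * max (V i) (Vhat i) := by
      intro i _
      have := mul_le_mul_of_nonneg_left (le_max_right (a i) (ahat i)) (hf₁ i).le
      have := mul_le_mul_of_nonneg_left (le_max_right (p i) (phat i)) (hf₂ i).le
      have := mul_le_mul_of_nonneg_left (le_max_right (V i) (Vhat i)) (hf₃ i).le
      linarith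
    have heq := (Finset.sum_eq_sum_iff_of_le hle).1 (le_antisymm (Finset.sum_le_sum hle) ho)
    have key : ∀ i, a i ≤ ahat i ∧ p i ≤ phat i ∧ V i ≤ Vhat i := by
      intro i
      have h0 := heq i (Finset.mem_univ i)
      have h1 := mul_le_mul_of_nonneg_left (le_max_right (a i) (ahat i)) (hf₁ i).le
      have h2 := mul_le_mul_of_nonneg_left (le_max_right (p i) (phat i)) (hf₂ i).le
      have h3 := mul_le_mul_of_nonneg_left (le_max_right (V i) (Vhat i)) (hf₃ i).le
      refine ⟨(le_max_left _ (ahat i)).trans (le_of_mul_le_mul_left ?_ (hf₁ i)),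
        (le_max_left _ (phat i)).trans (le_of_mul_le_mul_left ?_ (hf₂ i)),
        (le_max_left _ (Vhat i)).trans (le_of_mul_le_mul_left ?_ (hf₃ i))⟩
      · linarith
      · linarith
      · linarith
    exact ⟨fun i => (key i).1, fun i => (key i).2.1, fun i => (key i).2.2⟩
  constructor
  · rw [hAdm1] at hAdm
    obtain ⟨b1, ⟨b2, b3⟩, b4, b5, b6, b7, b8⟩ := hAdm
    obtain ⟨y, hy⟩ : ∃ y : Fin N → ℝ, ∀ i, y i = α * e i + β * P.transpose.mulVec phat i
      + γ * Th.transpose.mulVec Vhat i := ⟨_, fun i => rfl⟩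
    obtain ⟨x, hx⟩ : ∃ x : Fin N → ℝ, ∀ i, x i = e i + P.transpose.mulVec phat i
      + Th.transpose.mulVec Vhat i := ⟨_, fun i => rfl⟩
    have hyx : ∀ i, y i ≤ x i := by
      intro i
      have := mul_le_mul_of_nonneg_right hα1 (he i)
      have := mul_le_mul_of_nonneg_right hβ1 (nP phat b2 i)
      have := mul_le_mul_of_nonneg_right hγ1 (nT Vhat b4 i)
      rw [hy, hx]
      linarith
    have hy0 : ∀ i, 0 ≤ y i := by
      intro i
      have := mul_nonneg hα0 (he i)
      have := mul_nonneg hβ0 (nP phat b2 i)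
      have := mul_nonneg hγ0 (nT Vhat b4 i)
      rw [hy]
      linarith
    simp only [← hy, ← hx] at b5 b6 b7
    classical
    have hup : Adm1 (fun j => if ahat j = 1 ∨ l j ≤ y j then 1 else 0)
        (fun j => if ahat j = 1 then l j else min (l j) (y j))
        (fun j => if ahat j = 1 then min κ (x j - l j) else 0) := by
      have hp : ∀ j, phat j ≤ if ahat j = 1 then l j else min (l j) (y j) := by
        intro j
        split_ifs with h
        · exact b3 j
        · have h0 := (b1 j).resolve_right h
          have := b5 j
          rw [h0] at this
          exact le_min (b3 j) (by linarith)
      have hV : ∀ j, Vhat j ≤ if ahat j = 1 then min κ (x j - l j) else 0 := by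
        intro j
        have h7 := b7 j
        have h8 := b8 j
        split_ifs with h
        · rw [h] at h7 h8
          exact le_min (by linarith) (by linarith)
        · have h0 := (b1 j).resolve_right h
          rw [h0] at h8
          linarith
      have pp := mP _ _ hp
      have vv := mT _ _ hV
      rw [hAdm1]
      have hY : ∀ i, y i ≤ α * e i + β * P.transpose.mulVec
          (fun j => if ahat j = 1 then l j else min (l j) (y j)) i
          + γ * Th.transpose.mulVec
            (fun j => if ahat j = 1 then min κ (x j - l j) else 0) i := by
        intro i
        have := mul_le_mul_of_nonneg_left (pp i) hβ0
        have := mul_le_mul_of_nonneg_left (vv i) hγ0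
        have := hy i
        linarith
      have hX : ∀ i, x i ≤ e i + P.transpose.mulVec
          (fun j => if ahat j = 1 then l j else min (l j) (y j)) i
          + Th.transpose.mulVec
            (fun j => if ahat j = 1 then min κ (x j - l j) else 0) i := by
        intro i
        linarith [hx i, pp i, vv i]
      have hal : ∀ i, (if ahat i = 1 ∨ l i ≤ y i then (1:ℝ) else 0) * l i ≤ x i := by
        intro i
        have h6 := b6 i
        split_ifs with h
        · rcases h with h | h
          · rw [h] at h6
            exact h6
          · linarith [hyx i]
        · linarith [hyx i, hy0 i]
      refine ⟨fun i => ?_, ⟨fun i => (b2 i).trans (hp i), fun i => ?_⟩,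
        fun i => (b4 i).trans (hV i), fun i => ?_, fun i => (hal i).trans (hX i),
        fun i => ?_, fun i => ?_⟩
      · by_cases h : ahat i = 1 ∨ l i ≤ y i
        · right
          simp only [if_pos h]
        · left
          simp only [if_neg h]
      · dsimp only
        split_ifs
        · exact le_rfl
        · exact min_le_left _ _
      · have := hY i
        have := hy0 i
        have hli := hl i
        simp only [Pi.zero_apply] at hli
        by_cases h : ahat i = 1
        · simp only [if_pos h, if_pos (Or.inl h : ahat i = 1 ∨ l i ≤ y i)]
          linarith
        · have hm := min_le_right (l i) (y i)
          have : 0 ≤ (if ahat i = 1 ∨ l i ≤ y i then (1:ℝ) else 0) * l i :=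
            mul_nonneg (by split_ifs <;> norm_num) hli
          skip
          rw [if_neg h]
          linarith
      · have h1 := hX i
        have h2 := hal i
        by_cases h : ahat i = 1
        · have := min_le_right κ (x i - l i)
          simp only [if_pos h, if_pos (Or.inl h : ahat i = 1 ∨ l i ≤ y i)]
          linarith
        · skip
          rw [if_neg h]
          linarith
      · by_cases h : ahat i = 1
        · have := min_le_left κ (x i - l i)
          simp only [if_pos h, if_pos (Or.inl h : ahat i = 1 ∨ l i ≤ y i)]
          linarith
        · skip
          rw [if_neg h]
          exact mul_nonneg hκ0 (by split_ifs <;> norm_num)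
    obtain ⟨g1, g2, g3⟩ := hgr _ _ _ hup
    have c1 : ∀ i, ahat i = 1 → phat i = l i := by
      intro i h
      have := g2 i
      simp only [if_pos h] at this
      exact le_antisymm (b3 i) this
    have c0 : ∀ i, ahat i ≠ 1 → phat i = y i ∧ y i < l i ∧ Vhat i = 0 := by
      intro i h
      have h0 := (b1 i).resolve_right h
      have k1 := g1 i
      have k2 := g2 i
      have k5 := b5 i
      have k8 := b8 i
      have k4 := b4 i
      simp only [Pi.zero_apply] at k4
      have hlt : y i < l i := by
        by_contra hc
        simp only [if_pos (Or.inr (not_lt.1 hc) : ahat i = 1 ∨ l i ≤ y i)] at k1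
        linarith
      simp only [if_neg h, min_eq_right hlt.le] at k2
      rw [h0] at k5 k8
      exact ⟨by linarith, hlt, by linarith⟩
    have hxl : ∀ i, x i - l i ≤ max (e i + P.transpose.mulVec l i - l i) 0
        + Th.transpose.mulVec Vhat i := by
      intro i
      have := le_max_left (e i + P.transpose.mulVec l i - l i) 0
      have := mP phat l b3 i
      linarith [hx i]
    have hVhK : ∀ i, Vhat i ≤ K i := by
      apply hVK
      intro i
      by_cases h : ahat i = 1
      · have h7 := b7 i
        rw [h] at h7
        linarith [hxl i]
      · rw [(c0 i h).2.2]
        exact add_nonneg (le_max_right _ _) (nT Vhat b4 i)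
    have hxκ : ∀ i, x i - l i ≤ κ := by
      intro i
      linarith [hxl i, mT Vhat K hVhK i, hKfix i, hKκ i]
    rw [hClearing]
    simp only [← hy, ← hx]
    refine ⟨⟨b2, b3⟩, b4, fun i => ?_, fun i => ?_, fun i => ⟨fun hi => ?_, fun hi => ?_⟩⟩
    · by_cases h : ahat i = 1
      · have h6 := b6 i
        rw [h] at h6
        linarith [c1 i h]
      · linarith [(c0 i h).1, hyx i]
    · by_cases h : ahat i = 1
      · exact Or.inl (c1 i h)
      · exact Or.inr (c0 i h).1
    · by_cases h : ahat i = 1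
      · have k3 := g3 i
        have h7 := b7 i
        simp only [if_pos h, min_eq_right (hxκ i)] at k3
        rw [h] at h7
        linarith
      · linarith [(c0 i h).1, (c0 i h).2.1]
    · by_cases h : ahat i = 1
      · exact absurd (c1 i h) hi
      · exact (c0 i h).2.2
  · intro p V hc hVκ
    rw [hClearing] at hc
    obtain ⟨⟨a2, a3⟩, a4, a5, a6, a7⟩ := hc
    classical
    have hA : Adm1 (fun i => if p i = l i then 1 else 0) p V := by
      rw [hAdm1]
      refine ⟨fun i => ?_, ⟨a2, a3⟩, a4, fun i => ?_, fun i => ?_, fun i => ?_, fun i => ?_⟩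
      · by_cases h : p i = l i
        · right
          simp only [if_pos h]
        · left
          simp only [if_neg h]
      · have := mul_nonneg hα0 (he i)
        have := mul_nonneg hβ0 (nP p a2 i)
        have := mul_nonneg hγ0 (nT V a4 i)
        by_cases h : p i = l i
        · simp only [if_pos h]
          linarith
        · simp only [if_neg h]
          linarith [(a6 i).resolve_left h]
      · have := he i
        have := nP p a2 i
        have := nT V a4 i
        have := a5 i
        simp only [Pi.zero_apply] at *
        split_ifs with h <;> linarith
      · have := he i
        have := nP p a2 i
        have := nT V a4 i
        have := a5 i
        simp only [Pi.zero_apply] at *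
        split_ifs with h
        · linarith [(a7 i).1 h]
        · linarith [(a7 i).2 h]
      · skip
        split_ifs with h
        · linarith [hVκ i]
        · linarith [(a7 i).2 h]
    exact (hgr _ _ _ hA).2
end

section
/- If (ǎ,p̌,V̌) is optimal for problem P2 (admissible, with f(ǎ,p̌,V̌) ≤ f(a,p,V) for every admissible (a,p,V)), then p̌ = (1−ǎ)∘y(p̌,V̌) + ǎ∘l; that is, for each j, p̌ʲ = yʲ(p̌,V̌) if ǎʲ = 0 and p̌ʲ = lʲ if ǎʲ = 1. -/
open Matrix

/-- If `(ǎ,p̌,V̌)` is optimal for problem P2, then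
`p̌ = (1−ǎ)∘y(p̌,V̌) + ǎ∘l`. -/
theorem stmt12 (N : ℕ) (hN : 1 < N)
    (e l : Fin N → ℝ) (he : 0 ≤ e) (hl : 0 ≤ l)
    (P Th : Matrix (Fin N) (Fin N) ℝ)
    (hP : ∀ i j, 0 ≤ P i j) (hProw : ∀ i, ∑ j, P i j = 1)
    (hTh : ∀ i j, 0 ≤ Th i j) (hThrow : ∀ i, ∑ j, Th i j ≤ 1)
    (α β γ : ℝ) (hα : α ∈ Set.Icc (0:ℝ) 1) (hβ : β ∈ Set.Icc (0:ℝ) 1)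
    (hγ : γ ∈ Set.Icc (0:ℝ) 1)
    (hInv : IsUnit (1 - Th.transpose))
    (hInvNonneg : ∀ i j, 0 ≤ (1 - Th.transpose)⁻¹ i j)
    (K : Fin N → ℝ)
    (hK : K = (1 - Th.transpose)⁻¹.mulVec
      (fun i => max (e i + P.transpose.mulVec l i - l i) 0))
    (κ : ℝ) (hκ : κ = ⨆ i, K i)
    (κ₁ : ℝ) (hκ₁ : κ₁ = ⨆ i,
      (e i + P.transpose.mulVec l i + κ * Th.transpose.mulVec (fun _ => (1:ℝ)) i))
    (f₁ f₂ f₃ : Fin N → ℝ)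
    (hf₁ : ∀ i, 0 < f₁ i) (hf₂ : ∀ i, 0 < f₂ i) (hf₃ : ∀ i, 0 < f₃ i)
    (f : (Fin N → ℝ) → (Fin N → ℝ) → (Fin N → ℝ) → ℝ)
    (hf : f = fun a p V => ∑ i, (f₁ i * a i + f₂ i * p i + f₃ i * V i))
    (Adm2 : (Fin N → ℝ) → (Fin N → ℝ) → (Fin N → ℝ) → Prop)
    (hAdm2 : ∀ a p V : Fin N → ℝ, Adm2 a p V ↔
      ((∀ i, a i = 0 ∨ a i = 1) ∧ p ∈ Set.Icc (0 : Fin N → ℝ) l ∧ 0 ≤ V ∧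
      (∀ i, α * e i + β * P.transpose.mulVec p i + γ * Th.transpose.mulVec V i
        - κ₁ * a i ≤ p i) ∧
      (∀ i, a i * l i ≤ p i) ∧
      (∀ i, α * e i + β * P.transpose.mulVec p i + γ * Th.transpose.mulVec V i
        ≤ (1 - a i) * l i + κ₁ * a i) ∧
      (∀ i, e i + P.transpose.mulVec p i + Th.transpose.mulVec V i - l i
        - κ * (1 - a i) ≤ V i)))
    (acheck pcheck Vcheck : Fin N → ℝ)
    (hAdm : Adm2 acheck pcheck Vcheck)
    (hOpt : ∀ a p V : Fin N → ℝ, Adm2 a p V → f acheck pcheck Vcheck ≤ f a p V) :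
    pcheck = fun j =>
      (1 - acheck j) * (α * e j + β * P.transpose.mulVec pcheck j
        + γ * Th.transpose.mulVec Vcheck j) + acheck j * l j := by
  obtain ⟨h01, ⟨hp0, hpl⟩, hV, h1, h2, h3, h4⟩ := (hAdm2 _ _ _).1 hAdm
  have mono : ∀ (M : Matrix (Fin N) (Fin N) ℝ), (∀ i j, 0 ≤ M i j) →
      ∀ u v : Fin N → ℝ, (∀ i, u i ≤ v i) →
      ∀ i, M.transpose.mulVec u i ≤ M.transpose.mulVec v i := by
    intro M hM u v huv i
    simp only [Matrix.mulVec, dotProduct, Matrix.transpose_apply]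
    exact Finset.sum_le_sum fun j _ => mul_le_mul_of_nonneg_left (huv j) (hM j i)
  have nonneg : ∀ (M : Matrix (Fin N) (Fin N) ℝ), (∀ i j, 0 ≤ M i j) →
      ∀ u : Fin N → ℝ, (∀ i, 0 ≤ u i) → ∀ i, 0 ≤ M.transpose.mulVec u i := by
    intro M hM u hu i
    simp only [Matrix.mulVec, dotProduct, Matrix.transpose_apply]
    exact Finset.sum_nonneg fun j _ => mul_nonneg (hM j i) (hu j)
  have hy0 : ∀ j, 0 ≤ α * e j + β * P.transpose.mulVec pcheck j
        + γ * Th.transpose.mulVec Vcheck j := fun j =>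
    add_nonneg (add_nonneg (mul_nonneg hα.1 (he j))
      (mul_nonneg hβ.1 (nonneg P hP _ hp0 j))) (mul_nonneg hγ.1 (nonneg Th hTh _ hV j))
  set q : Fin N → ℝ := fun j =>
      (1 - acheck j) * (α * e j + β * P.transpose.mulVec pcheck j
        + γ * Th.transpose.mulVec Vcheck j) + acheck j * l j with hq
  have hqi : ∀ j, q j = (1 - acheck j) * (α * e j + β * P.transpose.mulVec pcheck j
        + γ * Th.transpose.mulVec Vcheck j) + acheck j * l j := fun j => rfl
  clear_value q
  have hqp : ∀ j, q j ≤ pcheck j := by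
    intro j
    have a1 := h1 j
    have a2 := h2 j
    rw [hqi j]
    rcases h01 j with h | h <;> rw [h] at a1 a2 ⊢ <;> linarith
  have hPq := mono P hP q pcheck hqp
  have hbq : ∀ i, β * P.transpose.mulVec q i ≤ β * P.transpose.mulVec pcheck i :=
    fun i => mul_le_mul_of_nonneg_left (hPq i) hβ.1
  have hadm' : Adm2 acheck q Vcheck := by
    refine (hAdm2 _ _ _).2 ⟨h01, ⟨fun j => ?_, fun j => (hqp j).trans (hpl j)⟩, hV,
      fun j => ?_, fun j => ?_, fun j => ?_, fun j => ?_⟩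
    · have := hy0 j
      have b := hl j
      simp only [Pi.zero_apply] at b ⊢
      rw [hqi j]
      rcases h01 j with h | h <;> rw [h] <;> linarith
    · have a1 := h1 j
      have b := hbq j
      have c := hpl j
      have d := hqi j
      rcases h01 j with h | h <;> rw [h] at a1 d ⊢ <;> linarith
    · have := hy0 j
      rw [hqi j]
      rcases h01 j with h | h <;> rw [h] <;> linarith
    · have := hbq j
      have := h3 j
      linarith
    · have := hPq j
      have := h4 j
      have := hqp j
      linarith
  have ho := hOpt _ _ _ hadm'
  rw [hf] at ho
  funext j
  by_contra hne
  have hlt : q j < pcheck j := lt_of_le_of_ne (hqp j) (Ne.symm hne)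
  refine absurd ho (not_le.2 ?_)
  refine Finset.sum_lt_sum (fun i _ => ?_) ⟨j, Finset.mem_univ j, ?_⟩
  · have := mul_le_mul_of_nonneg_left (hqp i) (hf₂ i).le
    linarith
  · have := mul_lt_mul_of_pos_left hlt (hf₂ j)
    linarith
end

section
/- If (ǎ,p̌,V̌) is optimal for problem P2, then V̌ = ǎ ∘ (x(p̌,V̌) − l)⁺; that is, for each j, V̌ʲ = (xʲ(p̌,V̌) − lʲ)⁺ if ǎʲ = 1 and V̌ʲ = 0 if ǎʲ = 0. -/
open Matrix

/-- If `(ǎ,p̌,V̌)` is optimal for problem P2, then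
`V̌ = ǎ ∘ (x(p̌,V̌) − l)⁺`. -/
theorem stmt13 (N : ℕ) (hN : 1 < N)
    (e l : Fin N → ℝ) (he : 0 ≤ e) (hl : 0 ≤ l)
    (P Th : Matrix (Fin N) (Fin N) ℝ)
    (hP : ∀ i j, 0 ≤ P i j) (hProw : ∀ i, ∑ j, P i j = 1)
    (hTh : ∀ i j, 0 ≤ Th i j) (hThrow : ∀ i, ∑ j, Th i j ≤ 1)
    (α β γ : ℝ) (hα : α ∈ Set.Icc (0:ℝ) 1) (hβ : β ∈ Set.Icc (0:ℝ) 1)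
    (hγ : γ ∈ Set.Icc (0:ℝ) 1)
    (hInv : IsUnit (1 - Th.transpose))
    (hInvNonneg : ∀ i j, 0 ≤ (1 - Th.transpose)⁻¹ i j)
    (K : Fin N → ℝ)
    (hK : K = (1 - Th.transpose)⁻¹.mulVec
      (fun i => max (e i + P.transpose.mulVec l i - l i) 0))
    (κ : ℝ) (hκ : κ = ⨆ i, K i)
    (κ₁ : ℝ) (hκ₁ : κ₁ = ⨆ i,
      (e i + P.transpose.mulVec l i + κ * Th.transpose.mulVec (fun _ => (1:ℝ)) i))
    (f₁ f₂ f₃ : Fin N → ℝ)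
    (hf₁ : ∀ i, 0 < f₁ i) (hf₂ : ∀ i, 0 < f₂ i) (hf₃ : ∀ i, 0 < f₃ i)
    (f : (Fin N → ℝ) → (Fin N → ℝ) → (Fin N → ℝ) → ℝ)
    (hf : f = fun a p V => ∑ i, (f₁ i * a i + f₂ i * p i + f₃ i * V i))
    (Adm2 : (Fin N → ℝ) → (Fin N → ℝ) → (Fin N → ℝ) → Prop)
    (hAdm2 : ∀ a p V : Fin N → ℝ, Adm2 a p V ↔
      ((∀ i, a i = 0 ∨ a i = 1) ∧ p ∈ Set.Icc (0 : Fin N → ℝ) l ∧ 0 ≤ V ∧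
      (∀ i, α * e i + β * P.transpose.mulVec p i + γ * Th.transpose.mulVec V i
        - κ₁ * a i ≤ p i) ∧
      (∀ i, a i * l i ≤ p i) ∧
      (∀ i, α * e i + β * P.transpose.mulVec p i + γ * Th.transpose.mulVec V i
        ≤ (1 - a i) * l i + κ₁ * a i) ∧
      (∀ i, e i + P.transpose.mulVec p i + Th.transpose.mulVec V i - l i
        - κ * (1 - a i) ≤ V i)))
    (acheck pcheck Vcheck : Fin N → ℝ)
    (hAdm : Adm2 acheck pcheck Vcheck)
    (hOpt : ∀ a p V : Fin N → ℝ, Adm2 a p V → f acheck pcheck Vcheck ≤ f a p V) :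
    Vcheck = fun j =>
      acheck j * max (e j + P.transpose.mulVec pcheck j
        + Th.transpose.mulVec Vcheck j - l j) 0 := by
  have hmono : ∀ (M : Matrix (Fin N) (Fin N) ℝ), (∀ i j, 0 ≤ M i j) →
      ∀ u v : Fin N → ℝ, (∀ i, u i ≤ v i) → ∀ i, M.mulVec u i ≤ M.mulVec v i := by
    intro M hM u v huv i
    simp only [Matrix.mulVec, dotProduct]
    exact Finset.sum_le_sum fun k _ => mul_le_mul_of_nonneg_left (huv k) (hM i k)
  have hTt : ∀ i j, 0 ≤ Th.transpose i j := fun i j => hTh j i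
  have hPt : ∀ i j, 0 ≤ P.transpose i j := fun i j => hP j i
  obtain ⟨ha, hp, hV, h1, h2, h3, h4⟩ := (hAdm2 _ _ _).1 hAdm
  set c : Fin N → ℝ := fun i => max (e i + P.transpose.mulVec l i - l i) 0 with hc
  have hdet : IsUnit (1 - Th.transpose).det := (Matrix.isUnit_iff_isUnit_det _).1 hInv
  have hK0 : ∀ i, 0 ≤ K i := by
    intro i
    rw [hK]
    simp only [Matrix.mulVec, dotProduct]
    exact Finset.sum_nonneg fun k _ => mul_nonneg (hInvNonneg i k) (le_max_right _ _)
  have hKκ : ∀ i, K i ≤ κ := by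
    intro i
    rw [hκ]
    exact le_ciSup (Set.finite_range K).bddAbove i
  have hκ0 : 0 ≤ κ := (hK0 ⟨0, by omega⟩).trans (hKκ _)
  have hKeq : ∀ i, K i = c i + Th.transpose.mulVec K i := by
    intro i
    have h : (1 - Th.transpose).mulVec K = c := by
      rw [hK, Matrix.mulVec_mulVec, Matrix.mul_nonsing_inv _ hdet, Matrix.one_mulVec]
    rw [Matrix.sub_mulVec, Matrix.one_mulVec] at h
    have := congrFun h i
    simp only [Pi.sub_apply] at this
    linarith
  -- the reduced vector
  set W : Fin N → ℝ := fun i => max (e i + P.transpose.mulVec pcheck i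
    + Th.transpose.mulVec Vcheck i - l i - κ * (1 - acheck i)) 0 with hW
  have hWV : ∀ i, W i ≤ Vcheck i := fun i => max_le (h4 i) (hV i)
  have hTW := hmono _ hTt W Vcheck hWV
  have hWadm : Adm2 acheck pcheck W := by
    rw [hAdm2]
    refine ⟨ha, hp, fun i => le_max_right _ _, fun i => ?_, h2, fun i => ?_, fun i => ?_⟩
    · have := mul_le_mul_of_nonneg_left (hTW i) hγ.1
      linarith [h1 i]
    · have := mul_le_mul_of_nonneg_left (hTW i) hγ.1
      linarith [h3 i]
    · refine le_trans ?_ (le_max_left _ _)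
      linarith [hTW i]
  have hle := hOpt _ _ _ hWadm
  have hVW : ∀ i, Vcheck i = W i := by
    by_contra hcon
    push Not at hcon
    obtain ⟨j, hj⟩ := hcon
    have hlt : W j < Vcheck j := lt_of_le_of_ne (hWV j) (Ne.symm hj)
    rw [hf] at hle
    refine absurd hle (not_le.2 ?_)
    refine Finset.sum_lt_sum (fun i _ => ?_) ⟨j, Finset.mem_univ j, ?_⟩
    · have := mul_le_mul_of_nonneg_left (hWV i) (hf₃ i).le
      linarith
    · have := mul_lt_mul_of_pos_left hlt (hf₃ j)
      linarith
  have hPl := hmono _ hPt pcheck l hp.2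
  have hTV0 : ∀ i, 0 ≤ Th.transpose.mulVec Vcheck i := by
    intro i
    simp only [Matrix.mulVec, dotProduct]
    exact Finset.sum_nonneg fun k _ => mul_nonneg (hTt i k) (hV k)
  have hxc : ∀ i, e i + P.transpose.mulVec pcheck i - l i ≤ c i := fun i =>
    le_trans (by linarith [hPl i]) (le_max_left _ _)
  have hc0 : ∀ i, 0 ≤ c i := fun i => le_max_right _ _
  have ha1 : ∀ i, 0 ≤ κ * (1 - acheck i) := by
    intro i
    rcases ha i with h | h <;> rw [h] <;> simp [hκ0]
  have hVc : ∀ i, (1 - Th.transpose).mulVec Vcheck i ≤ c i := by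
    intro i
    rw [Matrix.sub_mulVec, Matrix.one_mulVec, Pi.sub_apply]
    have : Vcheck i ≤ c i + Th.transpose.mulVec Vcheck i := by
      rw [hVW i]
      exact max_le (by linarith [hxc i, ha1 i]) (by linarith [hc0 i, hTV0 i])
    linarith
  have hVK : ∀ i, Vcheck i ≤ K i := by
    intro i
    have := hmono _ hInvNonneg _ _ hVc i
    rwa [Matrix.mulVec_mulVec, Matrix.nonsing_inv_mul _ hdet, Matrix.one_mulVec, ← hK] at this
  funext j
  rw [hVW j]
  rcases ha j with h | h
  · simp only [hW, h, zero_mul]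
    apply max_eq_right
    linarith [hxc j, hmono _ hTt _ _ hVK j, hKeq j, hKκ j]
  · simp only [hW, h, one_mul, sub_self, mul_zero, sub_zero]
end

section
/- If (ǎ,p̌,V̌) is optimal for problem P2, then ǎ = 1_{y(p̌,V̌) > l} (i.e., ǎʲ = 1 iff yʲ(p̌,V̌) > lʲ), and consequently p̌ = y(p̌,V̌) ∧ l (componentwise minimum). -/
open Matrix

/-- If `(ǎ,p̌,V̌)` is optimal for problem P2, then
`ǎ = 1_{y(p̌,V̌) > l}` and consequently `p̌ = y(p̌,V̌) ∧ l`. -/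
theorem stmt14 (N : ℕ) (hN : 1 < N)
    (e l : Fin N → ℝ) (he : 0 ≤ e) (hl : 0 ≤ l)
    (P Th : Matrix (Fin N) (Fin N) ℝ)
    (hP : ∀ i j, 0 ≤ P i j) (hProw : ∀ i, ∑ j, P i j = 1)
    (hTh : ∀ i j, 0 ≤ Th i j) (hThrow : ∀ i, ∑ j, Th i j ≤ 1)
    (α β γ : ℝ) (hα : α ∈ Set.Icc (0:ℝ) 1) (hβ : β ∈ Set.Icc (0:ℝ) 1)
    (hγ : γ ∈ Set.Icc (0:ℝ) 1)
    (hInv : IsUnit (1 - Th.transpose))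
    (hInvNonneg : ∀ i j, 0 ≤ (1 - Th.transpose)⁻¹ i j)
    (K : Fin N → ℝ)
    (hK : K = (1 - Th.transpose)⁻¹.mulVec
      (fun i => max (e i + P.transpose.mulVec l i - l i) 0))
    (κ : ℝ) (hκ : κ = ⨆ i, K i)
    (κ₁ : ℝ) (hκ₁ : κ₁ = ⨆ i,
      (e i + P.transpose.mulVec l i + κ * Th.transpose.mulVec (fun _ => (1:ℝ)) i))
    (f₁ f₂ f₃ : Fin N → ℝ)
    (hf₁ : ∀ i, 0 < f₁ i) (hf₂ : ∀ i, 0 < f₂ i) (hf₃ : ∀ i, 0 < f₃ i)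
    (f : (Fin N → ℝ) → (Fin N → ℝ) → (Fin N → ℝ) → ℝ)
    (hf : f = fun a p V => ∑ i, (f₁ i * a i + f₂ i * p i + f₃ i * V i))
    (Adm2 : (Fin N → ℝ) → (Fin N → ℝ) → (Fin N → ℝ) → Prop)
    (hAdm2 : ∀ a p V : Fin N → ℝ, Adm2 a p V ↔
      ((∀ i, a i = 0 ∨ a i = 1) ∧ p ∈ Set.Icc (0 : Fin N → ℝ) l ∧ 0 ≤ V ∧
      (∀ i, α * e i + β * P.transpose.mulVec p i + γ * Th.transpose.mulVec V i
        - κ₁ * a i ≤ p i) ∧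
      (∀ i, a i * l i ≤ p i) ∧
      (∀ i, α * e i + β * P.transpose.mulVec p i + γ * Th.transpose.mulVec V i
        ≤ (1 - a i) * l i + κ₁ * a i) ∧
      (∀ i, e i + P.transpose.mulVec p i + Th.transpose.mulVec V i - l i
        - κ * (1 - a i) ≤ V i)))
    (acheck pcheck Vcheck : Fin N → ℝ)
    (hAdm : Adm2 acheck pcheck Vcheck)
    (hOpt : ∀ a p V : Fin N → ℝ, Adm2 a p V → f acheck pcheck Vcheck ≤ f a p V) :
    (acheck = fun j =>
      if l j < α * e j + β * P.transpose.mulVec pcheck j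
        + γ * Th.transpose.mulVec Vcheck j then (1 : ℝ) else 0) ∧
    (pcheck = fun j =>
      min (α * e j + β * P.transpose.mulVec pcheck j
        + γ * Th.transpose.mulVec Vcheck j) (l j)) := by
  have hKn : ∀ i, 0 ≤ K i := by
    intro i
    rw [hK]
    simp only [Matrix.mulVec, dotProduct]
    exact Finset.sum_nonneg fun j _ => mul_nonneg (hInvNonneg i j) (le_max_right _ _)
  have hκn : 0 ≤ κ := by
    rw [hκ]
    exact Real.iSup_nonneg hKn
  have hmono : ∀ p q : Fin N → ℝ, (∀ i, p i ≤ q i) → ∀ i,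
      P.transpose.mulVec p i ≤ P.transpose.mulVec q i := by
    intro p q h i
    simp only [Matrix.mulVec, dotProduct]
    exact Finset.sum_le_sum fun j _ => mul_le_mul_of_nonneg_left (h j) (hP j i)
  obtain ⟨h01, ⟨hp0, hpl⟩, hV, h1, h2, h3, h4⟩ := (hAdm2 _ _ _).1 hAdm
  have hynn : ∀ i, 0 ≤ α * e i + β * P.transpose.mulVec pcheck i
      + γ * Th.transpose.mulVec Vcheck i := by
    intro i
    have a1 : 0 ≤ P.transpose.mulVec pcheck i := by
      simp only [Matrix.mulVec, dotProduct]
      exact Finset.sum_nonneg fun j _ => mul_nonneg (hP j i) (hp0 j)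
    have a2 : 0 ≤ Th.transpose.mulVec Vcheck i := by
      simp only [Matrix.mulVec, dotProduct]
      exact Finset.sum_nonneg fun j _ => mul_nonneg (hTh j i) (hV j)
    have := mul_nonneg hα.1 (he i)
    have := mul_nonneg hβ.1 a1
    have := mul_nonneg hγ.1 a2
    linarith
  have key : ∀ j, acheck j = 1 → l j < α * e j + β * P.transpose.mulVec pcheck j
        + γ * Th.transpose.mulVec Vcheck j := by
    intro j hj
    by_contra hcon
    have hcon := not_lt.1 hcon
    have hpj : l j ≤ pcheck j := by simpa [hj] using h2 j
    have hadm' : Adm2 (Function.update acheck j 0) pcheck Vcheck := by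
      rw [hAdm2]
      refine ⟨?_, ⟨hp0, hpl⟩, hV, ?_, ?_, ?_, ?_⟩ <;> intro i <;>
        rcases eq_or_ne i j with rfl | hij
      · simp
      · simpa [hij] using h01 i
      · simp only [Function.update_self]; linarith
      · simpa [hij] using h1 i
      · simpa using hp0 i
      · simpa [hij] using h2 i
      · simp only [Function.update_self]; linarith
      · simpa [hij] using h3 i
      · have := h4 i
        rw [hj] at this
        simp only [Function.update_self]; linarith
      · simpa [hij] using h4 i
    have hlt : f (Function.update acheck j 0) pcheck Vcheck < f acheck pcheck Vcheck := by
      rw [hf]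
      refine Finset.sum_lt_sum (fun i _ => ?_) ⟨j, Finset.mem_univ j, ?_⟩
      · rcases eq_or_ne i j with rfl | hij
        · have := hf₁ i
          simp only [Function.update_self, hj]; linarith
        · simp [hij]
      · have := hf₁ j
        simp only [Function.update_self, hj]; linarith
    exact absurd (hOpt _ _ _ hadm') (not_le.2 hlt)
  constructor
  · funext j
    rcases h01 j with hj | hj
    · have := h3 j
      rw [hj] at this
      rw [if_neg (by linarith), hj]
    · rw [if_pos (key j hj), hj]
  · funext j
    rcases h01 j with hj | hj
    · have h3j := h3 j
      have h1j := h1 j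
      rw [hj] at h3j h1j
      rw [min_eq_left (by linarith)]
      by_contra hne
      have hlt0 : α * e j + β * P.transpose.mulVec pcheck j
          + γ * Th.transpose.mulVec Vcheck j < pcheck j :=
        lt_of_le_of_ne (by linarith) (Ne.symm hne)
      obtain ⟨y, hy⟩ : ∃ y, y = α * e j + β * P.transpose.mulVec pcheck j
          + γ * Th.transpose.mulVec Vcheck j := ⟨_, rfl⟩
      have hyn : 0 ≤ y := hy ▸ hynn j
      rw [← hy] at hlt0
      obtain ⟨q, hq⟩ : ∃ q, q = Function.update pcheck j y := ⟨_, rfl⟩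
      have hqj : q j = y := by simp [hq]
      have hqi : ∀ i, i ≠ j → q i = pcheck i := fun i hi => by simp [hq, hi]
      have hqle : ∀ i, q i ≤ pcheck i := by
        intro i
        rcases eq_or_ne i j with rfl | hij
        · rw [hqj]; exact hlt0.le
        · rw [hqi i hij]
      have hm := hmono q pcheck hqle
      have hmβ := fun i => mul_le_mul_of_nonneg_left (hm i) hβ.1
      have hadm' : Adm2 acheck q Vcheck := by
        rw [hAdm2]
        refine ⟨h01, ⟨?_, fun i => (hqle i).trans (hpl i)⟩, hV, ?_, ?_, ?_, ?_⟩ <;> intro i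
        · rcases eq_or_ne i j with rfl | hij
          · rw [hqj]; exact hyn
          · rw [hqi i hij]; exact hp0 i
        · have := hmβ i
          rcases eq_or_ne i j with rfl | hij
          · rw [hqj, hj]; linarith
          · rw [hqi i hij]; linarith [h1 i]
        · rcases eq_or_ne i j with rfl | hij
          · rw [hqj, hj]; linarith
          · rw [hqi i hij]; exact h2 i
        · linarith [hmβ i, h3 i]
        · linarith [hm i, h4 i]
      have hlt : f acheck q Vcheck < f acheck pcheck Vcheck := by
        rw [hf]
        refine Finset.sum_lt_sum (fun i _ => ?_) ⟨j, Finset.mem_univ j, ?_⟩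
        · have := mul_le_mul_of_nonneg_left (hqle i) (hf₂ i).le
          linarith
        · have := mul_lt_mul_of_pos_left hlt0 (hf₂ j)
          rw [hqj]; linarith
      exact absurd (hOpt _ _ _ hadm') (not_le.2 hlt)
    · rw [min_eq_right (key j hj).le]
      have : l j ≤ pcheck j := by simpa [hj] using h2 j
      exact le_antisymm (hpl j) this
end

section
/- If e + Π'l + Θ'H(l) ≥ l componentwise, then (l, H(l)) is a clearing pair, and it is the maximal one: for every clearing pair (p,V), p ≤ l and V ≤ H(l). -/
open Matrix

/-- If `e + Π'l + Θ'H(l) ≥ l` componentwise, then `(l, H(l))` is a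
clearing pair, and it is the maximal one: for every clearing pair `(p,V)`, `p ≤ l`
and `V ≤ H(l)`. -/
theorem stmt16 (N : ℕ) (hN : 1 < N)
    (e l : Fin N → ℝ) (he : 0 ≤ e) (hl : 0 ≤ l)
    (P Th : Matrix (Fin N) (Fin N) ℝ)
    (hP : ∀ i j, 0 ≤ P i j) (hProw : ∀ i, ∑ j, P i j = 1)
    (hTh : ∀ i j, 0 ≤ Th i j) (hThrow : ∀ i, ∑ j, Th i j ≤ 1)
    (α β γ : ℝ) (hα : α ∈ Set.Icc (0:ℝ) 1) (hβ : β ∈ Set.Icc (0:ℝ) 1)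
    (hγ : γ ∈ Set.Icc (0:ℝ) 1)
    (Clearing : (Fin N → ℝ) → (Fin N → ℝ) → Prop)
    (hClearing : ∀ p V : Fin N → ℝ, Clearing p V ↔
      (p ∈ Set.Icc (0 : Fin N → ℝ) l ∧ 0 ≤ V ∧
      (∀ i, p i ≤ e i + P.transpose.mulVec p i + Th.transpose.mulVec V i) ∧
      (∀ i, p i = l i ∨
        p i = α * e i + β * P.transpose.mulVec p i + γ * Th.transpose.mulVec V i) ∧
      (∀ i, (p i = l i →
          V i = e i + P.transpose.mulVec p i + Th.transpose.mulVec V i - p i) ∧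
        (p i ≠ l i → V i = 0))))
    (Gp : (Fin N → ℝ) → (Fin N → ℝ) → Fin N → ℝ)
    (hGp : Gp = fun u V i =>
      max (e i + P.transpose.mulVec u i + Th.transpose.mulVec V i - l i) 0 *
        (if u i = l i then (1 : ℝ) else 0))
    (H : (Fin N → ℝ) → Fin N → ℝ)
    (hH : ∀ u ∈ Set.Icc (0 : Fin N → ℝ) l,
      H u = Gp u (H u) ∧ ∀ W : Fin N → ℝ, W = Gp u W → W = H u)
    (hcond : ∀ i, l i ≤ e i + P.transpose.mulVec l i + Th.transpose.mulVec (H l) i) :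
    Clearing l (H l) ∧ ∀ p V : Fin N → ℝ, Clearing p V → p ≤ l ∧ V ≤ H l := by
  have hlm : l ∈ Set.Icc (0 : Fin N → ℝ) l := ⟨hl, le_refl l⟩
  obtain ⟨hfix, huniq⟩ := hH l hlm
  have hmono : ∀ (A : Matrix (Fin N) (Fin N) ℝ), (∀ i j, 0 ≤ A i j) →
      ∀ v w : Fin N → ℝ, v ≤ w → ∀ i, A.transpose.mulVec v i ≤ A.transpose.mulVec w i := by
    intro A hA v w hvw i
    simp only [Matrix.mulVec, dotProduct, Matrix.transpose_apply]
    exact Finset.sum_le_sum fun j _ => mul_le_mul_of_nonneg_left (hvw j) (hA j i)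
  have hG : ∀ W i, Gp l W i =
      max (e i + P.transpose.mulVec l i + Th.transpose.mulVec W i - l i) 0 := by
    intro W i
    simp [hGp]
  have hHi : ∀ i, H l i =
      max (e i + P.transpose.mulVec l i + Th.transpose.mulVec (H l) i - l i) 0 := by
    intro i
    rw [← hG]
    exact congrFun hfix i
  refine ⟨?_, ?_⟩
  · rw [hClearing]
    refine ⟨hlm, ?_, hcond, fun i => Or.inl rfl, fun i => ⟨fun _ => ?_, fun h => absurd rfl h⟩⟩
    · intro i
      rw [hHi i]
      exact le_max_right _ _
    · have h := hHi i
      rwa [max_eq_left (by linarith [hcond i])] at h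
  · intro p V hpV
    rw [hClearing] at hpV
    obtain ⟨⟨_, hpl⟩, hV0, _, _, hE⟩ := hpV
    refine ⟨hpl, ?_⟩
    have hVsub : ∀ i, V i ≤ Gp l V i := by
      intro i
      rw [hG]
      by_cases h : p i = l i
      · refine le_trans ?_ (le_max_left _ _)
        have h1 := (hE i).1 h
        have h2 := hmono P hP p l hpl i
        linarith
      · rw [(hE i).2 h]
        exact le_max_right _ _
    have hGmono : ∀ v w : Fin N → ℝ, v ≤ w → ∀ i, Gp l v i ≤ Gp l w i := by
      intro v w hvw i
      rw [hG, hG]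
      refine max_le_max ?_ le_rfl
      have := hmono Th hTh v w hvw i
      linarith
    let W : Fin N → ℝ := V ⊔ H l
    have hVW : V ≤ W := le_sup_left
    have hHW : H l ≤ W := le_sup_right
    have hWsub : ∀ i, W i ≤ Gp l W i := by
      intro i
      refine sup_le ((hVsub i).trans (hGmono _ _ hVW i)) ?_
      exact (congrFun hfix i).le.trans (hGmono _ _ hHW i)
    have hdiff : ∀ i, Gp l W i - H l i ≤
        Th.transpose.mulVec W i - Th.transpose.mulVec (H l) i := by
      intro i
      have h1 := hmono Th hTh _ _ hHW i
      have h2 := hHi i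
      have h3 := le_max_left
        (e i + P.transpose.mulVec l i + Th.transpose.mulVec (H l) i - l i) 0
      have h4 := le_max_right
        (e i + P.transpose.mulVec l i + Th.transpose.mulVec (H l) i - l i) 0
      rw [← h2] at h3 h4
      have h5 : Gp l W i ≤
          H l i + (Th.transpose.mulVec W i - Th.transpose.mulVec (H l) i) := by
        rw [hG]
        exact max_le (by linarith) (by linarith)
      linarith
    have hsum : ∑ i, (Th.transpose.mulVec W i - Th.transpose.mulVec (H l) i) ≤
        ∑ i, (W i - H l i) := by
      simp only [Matrix.mulVec, dotProduct, Matrix.transpose_apply, ← Finset.sum_sub_distrib,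
        ← mul_sub]
      rw [Finset.sum_comm]
      refine Finset.sum_le_sum fun j _ => ?_
      rw [← Finset.sum_mul]
      exact mul_le_of_le_one_left (sub_nonneg.2 (hHW j)) (hThrow j)
    have htot : ∑ i, (Gp l W i - H l i) ≤ ∑ i, (W i - H l i) :=
      (Finset.sum_le_sum fun i _ => hdiff i).trans hsum
    rw [Finset.sum_sub_distrib, Finset.sum_sub_distrib] at htot
    have heq : ∑ i, W i = ∑ i, Gp l W i :=
      le_antisymm (Finset.sum_le_sum fun i _ => hWsub i) (by linarith)
    have hWfix : W = Gp l W := by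
      funext i
      exact (Finset.sum_eq_sum_iff_of_le fun i _ => hWsub i).1 heq i (Finset.mem_univ i)
    rw [← huniq W hWfix]
    exact hVW
end

section
/- The matrix Π₁ := Π̃ + α(1 − απ¹¹)⁻¹ T R has nonnegative entries and all its row sums are ≤ 1 (i.e., Π₁ is substochastic). -/
open Matrix

/-- The matrix `Π₁ := Π̃ + α(1 − απ¹¹)⁻¹ T R` has nonnegative entries and
all its row sums are `≤ 1` (i.e., `Π₁` is substochastic). Here `N = n+1 > 1`, `Π̃` is
`Π` with its first row and column deleted, `T` is the first column of `Π` with the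
first entry deleted, and `R` is the first row of `Π` with the first entry deleted. -/
theorem stmt17 (n : ℕ) (hn : 1 ≤ n)
    (P : Matrix (Fin (n + 1)) (Fin (n + 1)) ℝ)
    (hP : ∀ i j, 0 ≤ P i j) (hProw : ∀ i, ∑ j, P i j ≤ 1)
    (α : ℝ) (hα : α ∈ Set.Icc (0:ℝ) 1) (hα11 : α * P 0 0 < 1)
    (P₁ : Matrix (Fin n) (Fin n) ℝ)
    (hP₁ : P₁ = fun i j =>
      P i.succ j.succ + α * (1 - α * P 0 0)⁻¹ * (P i.succ 0 * P 0 j.succ)) :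
    (∀ i j, 0 ≤ P₁ i j) ∧ (∀ i, ∑ j, P₁ i j ≤ 1) := by
  obtain ⟨h0, h1⟩ := hα
  have hd : 0 < 1 - α * P 0 0 := by linarith
  have hc : 0 ≤ α * (1 - α * P 0 0)⁻¹ := mul_nonneg h0 (inv_nonneg.mpr hd.le)
  subst hP₁
  refine ⟨fun i j => add_nonneg (hP _ _) (mul_nonneg hc (mul_nonneg (hP _ _) (hP _ _))), ?_⟩
  intro i
  have hr0 := hProw 0
  have hri := hProw i.succ
  rw [Fin.sum_univ_succ] at hr0 hri
  have hle : α * (1 - α * P 0 0)⁻¹ * ∑ j : Fin n, P 0 j.succ ≤ 1 := by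
    have h2 : α * ∑ j : Fin n, P 0 j.succ ≤ 1 - α * P 0 0 := by
      have h3 := mul_le_mul_of_nonneg_left hr0 h0
      linarith
    calc α * (1 - α * P 0 0)⁻¹ * ∑ j : Fin n, P 0 j.succ
        = (α * ∑ j : Fin n, P 0 j.succ) / (1 - α * P 0 0) := by
          rw [div_eq_mul_inv]; ring
      _ ≤ 1 := (div_le_one hd).mpr h2
  have hm := mul_le_mul_of_nonneg_left hle (hP i.succ 0)
  have he : ∑ j : Fin n, (P i.succ j.succ
      + α * (1 - α * P 0 0)⁻¹ * (P i.succ 0 * P 0 j.succ))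
      = ∑ j : Fin n, P i.succ j.succ
        + P i.succ 0 * (α * (1 - α * P 0 0)⁻¹ * ∑ j : Fin n, P 0 j.succ) := by
    rw [Finset.sum_add_distrib, ← Finset.mul_sum, ← Finset.mul_sum]
    ring
  change ∑ j : Fin n, (P i.succ j.succ
      + α * (1 - α * P 0 0)⁻¹ * (P i.succ 0 * P 0 j.succ)) ≤ 1
  rw [he]
  linarith
end

section
/- The matrix Θ₁ := Θ̃ + α(1 − απ¹¹)⁻¹ M R has nonnegative entries and all its row sums are strictly less than 1. -/
open Matrix

/-- The matrix `Θ₁ := Θ̃ + α(1 − απ¹¹)⁻¹ M R` has nonnegative entries and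
all its row sums are strictly less than 1. Here `N = n+1 > 1`, `Θ̃` is `Θ` with its
first row and column deleted, `M` is the first column of `Θ` with the first entry
deleted, and `R` is the first row of `Π` with the first entry deleted. -/
theorem stmt18 (n : ℕ) (hn : 1 ≤ n)
    (P Th : Matrix (Fin (n + 1)) (Fin (n + 1)) ℝ)
    (hP : ∀ i j, 0 ≤ P i j) (hProw : ∀ i, ∑ j, P i j ≤ 1)
    (hTh : ∀ i j, 0 ≤ Th i j) (hThrow : ∀ i, ∑ j, Th i j < 1)
    (α : ℝ) (hα : α ∈ Set.Icc (0:ℝ) 1) (hα11 : α * P 0 0 < 1)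
    (Th₁ : Matrix (Fin n) (Fin n) ℝ)
    (hTh₁ : Th₁ = fun i j =>
      Th i.succ j.succ + α * (1 - α * P 0 0)⁻¹ * (Th i.succ 0 * P 0 j.succ)) :
    (∀ i j, 0 ≤ Th₁ i j) ∧ (∀ i, ∑ j, Th₁ i j < 1) := by
  obtain ⟨h0, h1⟩ := hα
  have hd : 0 < 1 - α * P 0 0 := by linarith
  subst hTh₁
  constructor
  · intro i j
    exact add_nonneg (hTh _ _) (mul_nonneg (mul_nonneg h0 (inv_nonneg.mpr hd.le))
      (mul_nonneg (hTh _ _) (hP _ _)))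
  · intro i
    have hT := hThrow i.succ
    have hR := hProw 0
    rw [Fin.sum_univ_succ] at hT hR
    change ∑ j : Fin n, (Th i.succ j.succ
      + α * (1 - α * P 0 0)⁻¹ * (Th i.succ 0 * P 0 j.succ)) < 1
    rw [Finset.sum_add_distrib, ← Finset.mul_sum, ← Finset.mul_sum]
    have key : α * (1 - α * P 0 0)⁻¹ * ∑ j : Fin n, P 0 j.succ ≤ 1 := by
      rw [mul_right_comm, ← div_eq_mul_inv, div_le_one hd]
      nlinarith [mul_le_mul_of_nonneg_left hR h0]
    have h2 := mul_le_mul_of_nonneg_left key (hTh i.succ 0)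
    linarith
end

section
/- For every b ∈ {0,1}^N, the set {p ∈ [0,l] : p = F_b(p)} is a singleton {p_b}, and p_b satisfies p_bⁱ = lⁱ if bⁱ = 1 and p_bⁱ < lⁱ if bⁱ = 0. Consequently, the fixpoint sets of F_b for distinct b ∈ {0,1}^N are pairwise disjoint. -/
open Matrix

theorem exists_fix_aux {N : ℕ} (l : Fin N → ℝ) (hl : ∀ i, 0 ≤ l i)
    (G : (Fin N → ℝ) → Fin N → ℝ)
    (hm : ∀ p ∈ Set.Icc (0 : Fin N → ℝ) l, ∀ q ∈ Set.Icc (0 : Fin N → ℝ) l, p ≤ q → G p ≤ G q)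
    (hG : ∀ p ∈ Set.Icc (0 : Fin N → ℝ) l, G p ∈ Set.Icc (0 : Fin N → ℝ) l) :
    ∃ p ∈ Set.Icc (0 : Fin N → ℝ) l, p = G p := by
  have hfact : ∀ i, Fact ((0:ℝ) ≤ l i) := fun i => ⟨hl i⟩
  have hmem : ∀ p : (∀ i, Set.Icc (0:ℝ) (l i)),
      (fun i => (p i : ℝ)) ∈ Set.Icc (0 : Fin N → ℝ) l :=
    fun p => ⟨fun i => (p i).2.1, fun i => (p i).2.2⟩
  let f : (∀ i, Set.Icc (0:ℝ) (l i)) →o (∀ i, Set.Icc (0:ℝ) (l i)) :=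
    { toFun := fun p i => ⟨G (fun i => (p i : ℝ)) i,
        (hG _ (hmem p)).1 i, (hG _ (hmem p)).2 i⟩
      monotone' := fun p q h i => hm _ (hmem p) _ (hmem q) (fun i => h i) i }
  have h := f.map_lfp
  refine ⟨fun i => (f.lfp i : ℝ), hmem _, ?_⟩
  funext i
  have h2 := congrArg (fun p : (∀ i, Set.Icc (0:ℝ) (l i)) => (p i : ℝ)) h
  exact h2.symm

/-- In the model with `Θ = 0`, `e = l`, `β = α`, where `lⁱ > 0` and
`α(l + Π'l)ⁱ < lⁱ` for all `i`: for every `b ∈ {0,1}^N` the set of fixpoints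
`{p ∈ [0,l] : p = F_b(p)}` is a singleton `{p_b}`, and `p_b` satisfies `p_bⁱ = lⁱ`
if `bⁱ = 1` and `p_bⁱ < lⁱ` if `bⁱ = 0`. Consequently, the fixpoint sets of `F_b`
for distinct `b` are pairwise disjoint. -/
theorem stmt19 (N : ℕ) (hN : 1 < N)
    (l : Fin N → ℝ) (hl : ∀ i, 0 < l i)
    (P : Matrix (Fin N) (Fin N) ℝ)
    (hP : ∀ i j, 0 ≤ P i j) (hProw : ∀ i, ∑ j, P i j = 1)
    (α : ℝ) (hα : α ∈ Set.Icc (0:ℝ) 1)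
    (hsmall : ∀ i, α * (l i + P.transpose.mulVec l i) < l i)
    (F : (Fin N → Bool) → (Fin N → ℝ) → Fin N → ℝ)
    (hF : F = fun b p i =>
      let di : ℝ := if l i + P.transpose.mulVec p i < l i then 1 else 0
      if b i then α * (l i + P.transpose.mulVec p i) * di + l i * (1 - di)
      else min (α * (l i + P.transpose.mulVec p i)) (l i)) :
    (∀ b : Fin N → Bool, ∃ pb : Fin N → ℝ,
      {p : Fin N → ℝ | p ∈ Set.Icc (0 : Fin N → ℝ) l ∧ p = F b p} = {pb} ∧
      ∀ i, (b i = true → pb i = l i) ∧ (b i = false → pb i < l i)) ∧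
    (∀ b b' : Fin N → Bool, b ≠ b' →
      {p : Fin N → ℝ | p ∈ Set.Icc (0 : Fin N → ℝ) l ∧ p = F b p} ∩
        {p : Fin N → ℝ | p ∈ Set.Icc (0 : Fin N → ℝ) l ∧ p = F b' p} = ∅) := by
  obtain ⟨hα0, hα1⟩ := hα
  have hmono : ∀ p q : Fin N → ℝ, p ≤ q → ∀ i, P.transpose.mulVec p i ≤ P.transpose.mulVec q i := by
    intro p q h i
    simp only [Matrix.mulVec, dotProduct, Matrix.transpose_apply]
    exact Finset.sum_le_sum fun j _ => mul_le_mul_of_nonneg_left (h j) (hP j i)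
  have hnn : ∀ p : Fin N → ℝ, 0 ≤ p → ∀ i, 0 ≤ P.transpose.mulVec p i := by
    intro p h i
    have := hmono 0 p h i
    simpa using this
  have hsumeq : ∀ p : Fin N → ℝ, ∑ i, P.transpose.mulVec p i = ∑ i, p i := by
    intro p
    simp only [Matrix.mulVec, dotProduct, Matrix.transpose_apply]
    rw [Finset.sum_comm]
    refine Finset.sum_congr rfl fun j _ => ?_
    rw [← Finset.sum_mul, hProw, one_mul]
  have hne : (Finset.univ : Finset (Fin N)).Nonempty := ⟨⟨0, by omega⟩, Finset.mem_univ _⟩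
  have hαlt : α < 1 := by
    have h1 := Finset.sum_lt_sum_of_nonempty hne (fun i _ => hsmall i)
    rw [← Finset.mul_sum, Finset.sum_add_distrib, hsumeq] at h1
    have h2 : 0 < ∑ i, l i := Finset.sum_pos (fun i _ => hl i) hne
    nlinarith
  have hlt : ∀ p ∈ Set.Icc (0 : Fin N → ℝ) l, ∀ i,
      α * (l i + P.transpose.mulVec p i) < l i := by
    intro p hp i
    refine lt_of_le_of_lt ?_ (hsmall i)
    exact mul_le_mul_of_nonneg_left (by linarith [hmono p l hp.2 i]) hα0
  have hFe : ∀ b, ∀ p ∈ Set.Icc (0 : Fin N → ℝ) l, ∀ i,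
      F b p i = if b i then l i else α * (l i + P.transpose.mulVec p i) := by
    intro b p hp i
    have h0 := hnn p hp.1 i
    have h1 : ¬ (l i + P.transpose.mulVec p i < l i) := by linarith
    subst hF
    simp only [if_neg h1, min_eq_left (hlt p hp i).le]
    simp
  have hchar : ∀ b, ∀ p ∈ Set.Icc (0 : Fin N → ℝ) l, p = F b p →
      ∀ i, (b i = true → p i = l i) ∧ (b i = false → p i < l i) := by
    intro b p hp h i
    have h1 := (congrFun h i).trans (hFe b p hp i)
    constructor
    · intro hb
      simpa [hb] using h1
    · intro hb
      have h2 : p i = α * (l i + P.transpose.mulVec p i) := by simpa [hb] using h1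
      rw [h2]
      exact hlt p hp i
  constructor
  · intro b
    obtain ⟨p, hp, hfix⟩ := exists_fix_aux l (fun i => (hl i).le) (F b)
      (by
        intro p hp q hq h i
        rw [hFe b p hp, hFe b q hq]
        split_ifs
        · exact le_rfl
        · exact mul_le_mul_of_nonneg_left (by linarith [hmono p q h i]) hα0)
      (by
        intro p hp
        refine ⟨fun i => ?_, fun i => ?_⟩
        · rw [hFe b p hp]
          split_ifs
          · exact (hl i).le
          · exact mul_nonneg hα0 (add_nonneg (hl i).le (hnn p hp.1 i))
        · rw [hFe b p hp]
          split_ifs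
          · exact le_rfl
          · exact (hlt p hp i).le)
    refine ⟨p, ?_, hchar b p hp hfix⟩
    refine Set.eq_singleton_iff_unique_mem.2 ⟨⟨hp, hfix⟩, ?_⟩
    rintro q ⟨hq, hqfix⟩
    have hle : ∀ i, |q i - p i| ≤ α * P.transpose.mulVec (fun j => |q j - p j|) i := by
      intro i
      have e1 := (congrFun hfix i).trans (hFe b p hp i)
      have e2 := (congrFun hqfix i).trans (hFe b q hq i)
      have hr := mul_nonneg hα0 (hnn (fun j => |q j - p j|) (fun j => abs_nonneg _) i)
      cases hb : b i
      · simp only [hb, Bool.false_eq_true, if_false] at e1 e2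
        have e3 : q i - p i = α * P.transpose.mulVec (q - p) i := by
          rw [Matrix.mulVec_sub, Pi.sub_apply]
          linarith
        rw [e3, abs_mul, abs_of_nonneg hα0]
        refine mul_le_mul_of_nonneg_left ?_ hα0
        rw [abs_le]
        constructor
        · have := hmono (-(fun j => |q j - p j|)) (q - p) (fun j => neg_abs_le _) i
          rwa [Matrix.mulVec_neg] at this
        · exact hmono _ _ (fun j => le_abs_self _) i
      · simp only [hb, if_true] at e1 e2
        rw [e1, e2, sub_self, abs_zero]
        exact hr
    have hs := Finset.sum_le_sum (fun i (_ : i ∈ Finset.univ) => hle i)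
    rw [← Finset.mul_sum, hsumeq] at hs
    have h0 : 0 ≤ ∑ i, |q i - p i| := Finset.sum_nonneg fun i _ => abs_nonneg _
    have hz : ∑ i, |q i - p i| = 0 := by nlinarith
    funext i
    have := (Finset.sum_eq_zero_iff_of_nonneg (fun i _ => abs_nonneg (q i - p i))).1 hz i
      (Finset.mem_univ i)
    exact sub_eq_zero.1 (abs_eq_zero.1 this)
  · intro b b' hb
    refine Set.eq_empty_of_forall_notMem ?_
    rintro p ⟨⟨hp, h1⟩, ⟨_, h2⟩⟩
    apply hb
    funext i
    have c1 := hchar b p hp h1 i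
    have c2 := hchar b' p hp h2 i
    cases hbi : b i <;> cases hbi' : b' i
    · rfl
    · exact absurd (c2.1 hbi') (c1.2 hbi).ne
    · exact absurd (c1.1 hbi) (c2.2 hbi').ne
    · rfl
end
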